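/- Let k be a field, e ≥ 3 an integer, 𝓠 = k[X₁, …, X_e] the polynomial ring, and Q the localization of 𝓠 at the maximal ideal (X₁, …, X_e). Let Φ be a 2 × 4 matrix whose entries are linear forms (homogeneous polynomials of degree 1) in 𝓠, let 𝓘 be the ideal of 𝓠 generated by the 2 × 2 minors of Φ, and assume that 𝓘 contains a 𝓠-regular sequence of length 3. Then the extension I of 𝓘 to Q is a grade 3 perfect ideal of resolution format (1, 6, 8, 3), and I is not licci. -/

import Mathlib

/-- An ideal `I` in a commutative Noetherian local ring `Q` has **resolution format**
`(1, m, m+n-1, n)` if the minimal free resolution of `Q/I` over `Q` is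
`0 → Q^n → Q^{m+n-1} → Q^m → Q`, i.e. there is an exact complex of free modules of the
indicated ranks augmented by `Q → Q/I → 0`, which is minimal in the sense that each
differential maps into `𝔫` times the target (`𝔫` the maximal ideal).  Equivalently, the
`i`-th entry of the format is the Betti number `dim_k Tor_i^Q(Q/I, k)`. -/
def HasResolutionFormat {Q : Type*} [CommRing Q] [IsLocalRing Q]
    (I : Ideal Q) (m n : ℕ) : Prop :=
  ∃ (d1 : (Fin m → Q) →ₗ[Q] Q)
    (d2 : (Fin (m + n - 1) → Q) →ₗ[Q] (Fin m → Q))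
    (d3 : (Fin n → Q) →ₗ[Q] (Fin (m + n - 1) → Q)),
    LinearMap.range d1 = I ∧
    LinearMap.range d2 = LinearMap.ker d1 ∧
    LinearMap.range d3 = LinearMap.ker d2 ∧
    LinearMap.ker d3 = ⊥ ∧
    I ≤ IsLocalRing.maximalIdeal Q ∧
    LinearMap.range d2 ≤ (IsLocalRing.maximalIdeal Q) • (⊤ : Submodule Q (Fin m → Q)) ∧
    LinearMap.range d3 ≤ (IsLocalRing.maximalIdeal Q) • (⊤ : Submodule Q (Fin (m + n - 1) → Q))

/-- `I` is a grade `3` perfect ideal of resolution format `(1, m, m+n-1, n)`: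
`I` contains a `Q`-regular sequence of length `3`, one has `m ≥ 3` and `n ≥ 1`, and the
minimal free resolution of `Q/I` has the format `(1, m, m+n-1, n)` (in particular `Q/I`
has projective dimension `3` as a `Q`-module, since `n ≥ 1`). -/
def IsGrade3PerfectOfFormat {Q : Type*} [CommRing Q] [IsLocalRing Q]
    (I : Ideal Q) (m n : ℕ) : Prop :=
  (∃ x y z : Q, x ∈ I ∧ y ∈ I ∧ z ∈ I ∧ RingTheory.Sequence.IsRegular Q [x, y, z]) ∧
  3 ≤ m ∧ 1 ≤ n ∧ HasResolutionFormat I m n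

/-- `J` is **directly linked** to `I` if there is a `Q`-regular sequence `x₁, x₂, x₃` of
elements of `I` with `J = (x₁, x₂, x₃) : I`. -/
def DirectlyLinked {Q : Type*} [CommRing Q] (I J : Ideal Q) : Prop :=
  ∃ x y z : Q, x ∈ I ∧ y ∈ I ∧ z ∈ I ∧ RingTheory.Sequence.IsRegular Q [x, y, z] ∧
    J = Submodule.colon (Ideal.span {x, y, z}) I

/-- `J` is **linked** to `I` if there is a finite chain of ideals
`I = J₀, J₁, …, J_r = J` in which `J_{i+1}` is directly linked to `J_i` for every `i`. -/
def Linked {Q : Type*} [CommRing Q] (I J : Ideal Q) : Prop :=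
  Relation.ReflTransGen (fun A B => DirectlyLinked A B) I J

/-- `I` is **licci** if it is linked to an ideal generated by a `Q`-regular sequence of
length `3`, i.e. `I` is in the linkage class of a complete intersection ideal. -/
def Licci {Q : Type*} [CommRing Q] (I : Ideal Q) : Prop :=
  ∃ C : Ideal Q, Linked I C ∧
    ∃ x y z : Q, RingTheory.Sequence.IsRegular Q [x, y, z] ∧ C = Ideal.span {x, y, z}

/-- The ideal of `2 × 2` minors of a matrix `Φ` over a commutative ring: the ideal
generated by the determinants of all `2 × 2` submatrices of `Φ`. -/
def minors2 {R : Type*} [CommRing R] {p q : ℕ}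
    (Φ : Matrix (Fin p) (Fin q) R) : Ideal R :=
  Ideal.span { d : R | ∃ (r : Fin 2 → Fin p) (c : Fin 2 → Fin q),
    Function.Injective r ∧ Function.Injective c ∧ d = (Φ.submatrix r c).det }

/-!
The Eagon–Northcott complex of `Φ` is exact because `I` has grade three, and it is minimal of
format `(1, 6, 8, 3)`.

For the second claim say that an ideal `I` of an Artinian ring `R` has *excess* if
`3 · ℓ(R/I) < ℓ(Hom(I, R/I))`. If `R/(x, y, z)` is Gorenstein Artinian, a Leibniz rule for
homomorphisms shows that `I` and `(x, y, z) : I` have excess simultaneously, while an ideal with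
three generators never does. A faithfully flat base change makes `k` infinite, so a finite chain of
links starting at the ideal of minors can be cut down to Artinian rings by `e - 3` linear forms
which are general for all the linking sequences at once. The ideal of minors then becomes `𝔫²`,
where `𝔫` has three generators and the six minors generate `𝔫²` minimally. With
`ν = ℓ(𝔫/𝔫²) ≥ 2` this gives `ℓ(Hom(𝔫², R/𝔫²)) ≥ 6ν > 3(1 + ν) = 3 · ℓ(R/𝔫²)`, so the chain starts
at an ideal with excess and cannot end in a complete intersection.
-/

open IsLocalRing RingTheory.Sequence

namespace Linkage

/-! ### Regular sequences on cyclic modules -/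

section RegularSequences

variable {R : Type*} [CommRing R]

theorem mem_sup_span_singleton {K : Ideal R} {x c : R} :
    c ∈ K ⊔ Ideal.span {x} ↔ ∃ w, c - x * w ∈ K := by
  rw [sup_comm, Ideal.mem_span_singleton_sup]
  constructor
  · rintro ⟨w, b, hb, rfl⟩
    exact ⟨w, by simpa [mul_comm] using hb⟩
  · rintro ⟨w, hw⟩
    exact ⟨w, _, hw, by ring⟩

theorem mem_of_mul_mem {K : Ideal R} {x c : R} (hx : IsSMulRegular (R ⧸ K) x)
    (hc : x * c ∈ K) : c ∈ K :=
  mem_of_isSMulRegular_quotient_of_smul_mem hx hc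

/-- The isomorphism `(R/K)/I(R/K) ≃ R/(K + I)`. -/
noncomputable def quotientSMulTopEquiv (K I : Ideal R) :
    ((R ⧸ K) ⧸ (I • ⊤ : Submodule R (R ⧸ K))) ≃ₗ[R] R ⧸ K ⊔ I :=
  (Submodule.quotEquivOfEq _ _ (by
    rw [← (Submodule.map_mkQ_eq_top K ⊤).2 (sup_top_eq K), ← Submodule.map_smul'', smul_eq_mul,
      Ideal.mul_top])) ≪≫ₗ
  Submodule.quotientQuotientEquivQuotientSup K I

theorem isWeaklyRegular_quotient_append {K : Ideal R} {L M : List R} :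
    IsWeaklyRegular (R ⧸ K) (L ++ M) ↔
      IsWeaklyRegular (R ⧸ K) L ∧ IsWeaklyRegular (R ⧸ K ⊔ Ideal.ofList L) M := by
  rw [isWeaklyRegular_append_iff, (quotientSMulTopEquiv K _).isWeaklyRegular_congr]

theorem isWeaklyRegular_quotient_cons {K : Ideal R} {x : R} {L : List R} :
    IsWeaklyRegular (R ⧸ K) (x :: L) ↔
      IsSMulRegular (R ⧸ K) x ∧ IsWeaklyRegular (R ⧸ K ⊔ Ideal.span {x}) L := by
  rw [← List.singleton_append, isWeaklyRegular_quotient_append, isWeaklyRegular_singleton_iff,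
    Ideal.ofList_singleton]

theorem isWeaklyRegular_quotient_bot {L : List R} :
    IsWeaklyRegular (R ⧸ (⊥ : Ideal R)) L ↔ IsWeaklyRegular R L :=
  (Submodule.quotEquivOfEqBot _ rfl).isWeaklyRegular_congr L

end RegularSequences

/-! ### The Eagon–Northcott complex of a `2 × 4` matrix -/

section Acyclicity

variable {R : Type*} [CommRing R] {M N P : Type*} [AddCommGroup M] [Module R M]
  [AddCommGroup N] [Module R N] [AddCommGroup P] [Module R P]

/-- Exactness at `N` of the reduction of `M → N → P` modulo the ideal `K`. -/
def ExactModulo (K : Ideal R) (f : M →ₗ[R] N) (g : N →ₗ[R] P) : Prop :=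
  ∀ u, g u ∈ K • (⊤ : Submodule R P) → ∃ v, u - f v ∈ K • (⊤ : Submodule R N)

theorem map_mem_smul_top {K : Ideal R} (f : M →ₗ[R] N) {u : M}
    (hu : u ∈ K • (⊤ : Submodule R M)) : f u ∈ K • (⊤ : Submodule R N) :=
  Submodule.smul_top_le_comap_smul_top K f hu

theorem exists_sub_smul_mem_of_mem_sup {K : Ideal R} {x : R} {u : M}
    (hu : u ∈ (K ⊔ Ideal.span {x}) • (⊤ : Submodule R M)) :
    ∃ w, u - x • w ∈ K • (⊤ : Submodule R M) := by
  rw [Submodule.sup_smul, Submodule.ideal_span_singleton_smul] at hu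
  obtain ⟨v, hv, _, ⟨w, -, rfl⟩, rfl⟩ := Submodule.mem_sup.1 hu
  exact ⟨w, by simpa using hv⟩

theorem mem_smul_top_pi {ι : Type*} [Finite ι] {K : Ideal R} {u : ι → R} :
    u ∈ K • (⊤ : Submodule R (ι → R)) ↔ ∀ i, u i ∈ K := by
  cases nonempty_fintype ι
  classical
  refine ⟨fun hu i => by simpa using map_mem_smul_top (LinearMap.proj i) hu, fun hu => ?_⟩
  rw [pi_eq_sum_univ u]
  exact Submodule.sum_mem _ fun i _ => Submodule.smul_mem_smul (hu i) trivial

theorem mem_smul_top_pi_of_smul_mem {ι : Type*} [Finite ι] {K : Ideal R} {x : R}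
    (hx : IsSMulRegular (R ⧸ K) x) (u : ι → R)
    (hu : x • u ∈ K • (⊤ : Submodule R (ι → R))) : u ∈ K • (⊤ : Submodule R (ι → R)) :=
  mem_smul_top_pi.2 fun i => mem_of_mul_mem hx (mem_smul_top_pi.1 hu i)

/-- Exactness moves one step down a complex along a regular element that is null-homotopic. -/
theorem ExactModulo.of_homotopy {L : Type*} [AddCommGroup L] [Module R L] {K : Ideal R} {x : R}
    {e : L →ₗ[R] M} {f : M →ₗ[R] N} {g : N →ₗ[R] P}
    (hx : ∀ u : N, x • u ∈ K • (⊤ : Submodule R N) → u ∈ K • (⊤ : Submodule R N))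
    (s : N →ₗ[R] M) (t : P →ₗ[R] N) (hst : ∀ u, x • u = f (s u) + t (g u))
    (hfe : ∀ u, f (e u) = 0) (h : ExactModulo (K ⊔ Ideal.span {x}) e f) :
    ExactModulo K f g := by
  intro u hu
  have hsu : x • u - f (s u) ∈ K • (⊤ : Submodule R N) := by
    simpa [hst u] using map_mem_smul_top t hu
  have hfsu : f (s u) ∈ (K ⊔ Ideal.span {x}) • (⊤ : Submodule R N) := by
    have hxu : x • u ∈ (K ⊔ Ideal.span {x}) • (⊤ : Submodule R N) :=
      Submodule.smul_mem_smul (Ideal.mem_sup_right (Ideal.mem_span_singleton_self x)) trivial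
    simpa using sub_mem hxu (Submodule.smul_mono_left le_sup_left hsu)
  obtain ⟨v, hv⟩ := h _ hfsu
  obtain ⟨w, hw⟩ := exists_sub_smul_mem_of_mem_sup hv
  refine ⟨w, hx _ ?_⟩
  have hfw : f (s u) - x • f w ∈ K • (⊤ : Submodule R N) := by
    simpa [hfe] using map_mem_smul_top f hw
  simpa [smul_sub] using add_mem hsu hfw

theorem ExactModulo.exact {f : M →ₗ[R] N} {g : N →ₗ[R] P} (h : ExactModulo ⊥ f g)
    (hfg : ∀ u, g (f u) = 0) : LinearMap.range f = LinearMap.ker g := by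
  refine le_antisymm (by rintro _ ⟨u, rfl⟩; exact hfg u) fun u hu => ?_
  obtain ⟨v, hv⟩ := h u (by simp [LinearMap.mem_ker.1 hu])
  exact ⟨v, (sub_eq_zero.1 (by simpa using hv)).symm⟩

theorem range_mulVecLin_le_smul_top {m n : ℕ} {K : Ideal R} {A : Matrix (Fin m) (Fin n) R}
    (hA : ∀ i j, A i j ∈ K) :
    LinearMap.range A.mulVecLin ≤ K • (⊤ : Submodule R (Fin m → R)) := by
  rintro _ ⟨u, rfl⟩
  exact mem_smul_top_pi.2 fun i =>
    (K.sum_mem fun j _ => K.mul_mem_right _ (hA i j) : ∑ j, A i j * u j ∈ K)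

end Acyclicity

section EagonNorthcott

variable {R : Type*} [CommRing R] (a b : Fin 4 → R)

/-- The `2 × 2` minors of the matrix with rows `a` and `b`, the pairs of columns being listed in
the order `01, 02, 03, 12, 13, 23`. This is also the order of the coordinates of `Fin 6 → R`,
which stands for `⋀² R⁴`. -/
def minorVector : Fin 6 → R :=
  ![a 0 * b 1 - a 1 * b 0, a 0 * b 2 - a 2 * b 0, a 0 * b 3 - a 3 * b 0,
    a 1 * b 2 - a 2 * b 1, a 1 * b 3 - a 3 * b 1, a 2 * b 3 - a 3 * b 2]

/-- The first differential of the Eagon–Northcott complex of the matrix with rows `a` and `b`. -/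
def eagonNorthcott₁ : (Fin 6 → R) →ₗ[R] R :=
  Fintype.linearCombination R (minorVector a b)

/-- The second differential of the Eagon–Northcott complex of the matrix with rows `a` and `b`,
in a signed basis of `R² ⊗ ⋀³ R⁴`. -/
def eagonNorthcott₂ : (Fin 8 → R) →ₗ[R] (Fin 6 → R) :=
  Matrix.mulVecLin
    !![0, 0, a 3, a 2, 0, 0, b 3, b 2;
      0, a 3, 0, -a 1, 0, b 3, 0, -b 1;
      0, -a 2, -a 1, 0, 0, -b 2, -b 1, 0;
      a 3, 0, 0, a 0, b 3, 0, 0, b 0;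
      -a 2, 0, a 0, 0, -b 2, 0, b 0, 0;
      a 1, a 0, 0, 0, b 1, b 0, 0, 0]

/-- The third differential of the Eagon–Northcott complex of the matrix with rows `a` and `b`. -/
def eagonNorthcott₃ : (Fin 3 → R) →ₗ[R] (Fin 8 → R) :=
  Matrix.mulVecLin
    !![a 0, b 0, 0; -a 1, -b 1, 0; a 2, b 2, 0; -a 3, -b 3, 0;
      0, a 0, b 0; 0, -a 1, -b 1; 0, a 2, b 2; 0, -a 3, -b 3]

/-- The contraction of an element of `⋀² R⁴` by the linear form `c` on `R⁴`, up to sign. -/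
def contract (c : Fin 4 → R) (u : Fin 6 → R) : Fin 4 → R :=
  ![c 1 * u 0 + c 2 * u 1 + c 3 * u 2, c 0 * u 0 - c 2 * u 3 - c 3 * u 4,
    c 0 * u 1 + c 1 * u 3 - c 3 * u 5, c 0 * u 2 + c 1 * u 4 + c 2 * u 5]

/-- The wedge product of `u ∈ ⋀² R⁴` and `v ∈ R⁴`, in the signed basis of `⋀³ R⁴` used for
`eagonNorthcott₂`. -/
def wedge (u : Fin 6 → R) (v : Fin 4 → R) : Fin 4 → R :=
  ![u 3 * v 3 - u 4 * v 2 + u 5 * v 1, u 1 * v 3 - u 2 * v 2 - u 5 * v 0,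
    u 0 * v 3 - u 2 * v 1 - u 4 * v 0, u 0 * v 2 - u 1 * v 1 - u 3 * v 0]

/-- The product of an element of degree `1` with elements of degree `1` in a multiplicative
structure on the Eagon–Northcott complex. -/
def eagonNorthcottMul₁ (m : Fin 6 → R) : (Fin 6 → R) →ₗ[R] (Fin 8 → R) where
  toFun u := Fin.append (wedge m (contract b u)) (wedge u (contract a m))
  map_add' u v := by
    ext i
    fin_cases i <;> simp [Fin.append, Fin.addCases, wedge, contract] <;> ring
  map_smul' c u := by
    ext i
    fin_cases i <;> simp [Fin.append, Fin.addCases, wedge, contract] <;> ring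

/-- The product of an element of degree `1` with elements of degree `2` in a multiplicative
structure on the Eagon–Northcott complex. -/
def eagonNorthcottMul₂ (m : Fin 6 → R) : (Fin 8 → R) →ₗ[R] (Fin 3 → R) :=
  let α := contract a m
  let β := contract b m
  Matrix.mulVecLin
    !![β 0, β 1, -β 2, β 3, 0, 0, 0, 0;
      -α 0, -α 1, α 2, -α 3, 0, 0, 0, 0;
      0, 0, 0, 0, -α 0, -α 1, α 2, -α 3]

variable {a b}

theorem eagonNorthcott₁_comp_eagonNorthcott₂ (w : Fin 8 → R) :
    eagonNorthcott₁ a b (eagonNorthcott₂ a b w) = 0 := by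
  simp [eagonNorthcott₁, eagonNorthcott₂, minorVector, Fintype.linearCombination_apply,
    Fin.sum_univ_succ, Matrix.vecHead, Matrix.vecTail]
  ring

theorem eagonNorthcott₂_comp_eagonNorthcott₃ (v : Fin 3 → R) :
    eagonNorthcott₂ a b (eagonNorthcott₃ a b v) = 0 := by
  ext i
  fin_cases i <;>
    simp [eagonNorthcott₂, eagonNorthcott₃, Matrix.vecHead, Matrix.vecTail] <;> ring

theorem eagonNorthcott_leibniz₁ (m u : Fin 6 → R) :
    eagonNorthcott₁ a b m • u =
      eagonNorthcott₂ a b (eagonNorthcottMul₁ a b m u) + eagonNorthcott₁ a b u • m := by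
  ext i
  fin_cases i <;>
    simp [eagonNorthcott₁, eagonNorthcott₂, eagonNorthcottMul₁, minorVector, wedge, contract,
      Fintype.linearCombination_apply, Fin.sum_univ_succ, Fin.append, Fin.addCases,
      Matrix.vecHead, Matrix.vecTail] <;>
    ring

theorem eagonNorthcott_leibniz₂ (m : Fin 6 → R) (w : Fin 8 → R) :
    eagonNorthcott₁ a b m • w =
      eagonNorthcott₃ a b (eagonNorthcottMul₂ a b m w) +
        eagonNorthcottMul₁ a b m (eagonNorthcott₂ a b w) := by
  ext i
  fin_cases i <;>
    simp [eagonNorthcott₁, eagonNorthcott₂, eagonNorthcott₃, eagonNorthcottMul₁,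
      eagonNorthcottMul₂, minorVector, wedge, contract, Fintype.linearCombination_apply,
      Fin.sum_univ_succ, Fin.append, Fin.addCases, Matrix.vecHead, Matrix.vecTail] <;>
    ring

theorem eagonNorthcott_leibniz₃ (m : Fin 6 → R) (v : Fin 3 → R) :
    eagonNorthcott₁ a b m • v = eagonNorthcottMul₂ a b m (eagonNorthcott₃ a b v) := by
  ext i
  fin_cases i <;>
    simp [eagonNorthcott₁, eagonNorthcott₃, eagonNorthcottMul₂, minorVector, contract,
      Fintype.linearCombination_apply, Fin.sum_univ_succ, Matrix.vecHead, Matrix.vecTail] <;>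
    ring

end EagonNorthcott

section Acyclic

variable {R : Type*} [CommRing R] {a b : Fin 4 → R} {K : Ideal R} {x y z : R}

theorem exactModulo_eagonNorthcott₃ (hx : x ∈ LinearMap.range (eagonNorthcott₁ a b))
    (h : IsWeaklyRegular (R ⧸ K) [x]) :
    ExactModulo K (0 : PUnit.{1} →ₗ[R] Fin 3 → R) (eagonNorthcott₃ a b) := by
  obtain ⟨m, rfl⟩ := hx
  refine .of_homotopy (e := (0 : PUnit.{1} →ₗ[R] PUnit.{1}))
    (mem_smul_top_pi_of_smul_mem (isWeaklyRegular_quotient_cons.1 h).1) 0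
    (eagonNorthcottMul₂ a b m) (fun v => ?_) (fun _ => rfl) fun _ _ => ⟨0, zero_mem _⟩
  rw [eagonNorthcott_leibniz₃, LinearMap.zero_apply, zero_add]

theorem exactModulo_eagonNorthcott₃₂ (hx : x ∈ LinearMap.range (eagonNorthcott₁ a b))
    (hy : y ∈ LinearMap.range (eagonNorthcott₁ a b)) (h : IsWeaklyRegular (R ⧸ K) [x, y]) :
    ExactModulo K (eagonNorthcott₃ a b) (eagonNorthcott₂ a b) := by
  rw [isWeaklyRegular_quotient_cons] at h
  obtain ⟨m, rfl⟩ := hx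
  exact .of_homotopy (mem_smul_top_pi_of_smul_mem h.1) (eagonNorthcottMul₂ a b m)
    (eagonNorthcottMul₁ a b m) (eagonNorthcott_leibniz₂ m) (fun _ => map_zero _)
    (exactModulo_eagonNorthcott₃ hy h.2)

theorem exactModulo_eagonNorthcott₂₁ (hx : x ∈ LinearMap.range (eagonNorthcott₁ a b))
    (hy : y ∈ LinearMap.range (eagonNorthcott₁ a b))
    (hz : z ∈ LinearMap.range (eagonNorthcott₁ a b)) (h : IsWeaklyRegular (R ⧸ K) [x, y, z]) :
    ExactModulo K (eagonNorthcott₂ a b) (eagonNorthcott₁ a b) := by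
  rw [isWeaklyRegular_quotient_cons] at h
  obtain ⟨m, rfl⟩ := hx
  exact .of_homotopy (mem_smul_top_pi_of_smul_mem h.1) (eagonNorthcottMul₁ a b m)
    (LinearMap.toSpanSingleton R _ m) (eagonNorthcott_leibniz₁ m)
    eagonNorthcott₂_comp_eagonNorthcott₃ (exactModulo_eagonNorthcott₃₂ hy hz h.2)

theorem range_eagonNorthcott₂_le (ha : ∀ i, a i ∈ K) (hb : ∀ i, b i ∈ K) :
    LinearMap.range (eagonNorthcott₂ a b) ≤ K • (⊤ : Submodule R (Fin 6 → R)) :=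
  range_mulVecLin_le_smul_top (by simp [Fin.forall_fin_succ, ha, hb])

theorem range_eagonNorthcott₃_le (ha : ∀ i, a i ∈ K) (hb : ∀ i, b i ∈ K) :
    LinearMap.range (eagonNorthcott₃ a b) ≤ K • (⊤ : Submodule R (Fin 8 → R)) :=
  range_mulVecLin_le_smul_top (by simp [Fin.forall_fin_succ, ha, hb])

end Acyclic

section Minors

variable {R : Type*} [CommRing R] (Φ : Matrix (Fin 2) (Fin 4) R)

theorem range_eagonNorthcott₁_eq_span (a b : Fin 4 → R) :
    LinearMap.range (eagonNorthcott₁ a b) = Ideal.span (Set.range (minorVector a b)) :=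
  Fintype.range_linearCombination R _

theorem minor_mem_span_minorVector (a b : Fin 4 → R) (i j : Fin 4) :
    a i * b j - a j * b i ∈ Ideal.span (Set.range (minorVector a b)) := by
  wlog hij : i < j generalizing i j
  · rcases (not_lt.1 hij).eq_or_lt with rfl | hji
    · simp
    · rw [← neg_sub]
      exact neg_mem (this j i hji)
  suffices ∃ n, minorVector a b n = a i * b j - a j * b i from Ideal.subset_span this
  have hpair : ∀ i j : Fin 4, i < j →
      ∃ n : Fin 6, ![0, 0, 0, 1, 1, 2] n = i ∧ ![1, 2, 3, 2, 3, 3] n = j := by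
    decide
  obtain ⟨n, rfl, rfl⟩ := hpair i j hij
  refine ⟨n, ?_⟩
  fin_cases n <;> rfl

theorem minorVector_mem_minors2 (n : Fin 6) : minorVector (Φ 0) (Φ 1) n ∈ minors2 Φ := by
  have hminor (i j : Fin 4) (hij : i ≠ j) : Φ 0 i * Φ 1 j - Φ 0 j * Φ 1 i ∈ minors2 Φ :=
    Ideal.subset_span ⟨id, ![i, j], Function.injective_id, by
      simp [Function.Injective, Fin.forall_fin_two, hij, hij.symm], by simp [Matrix.det_fin_two]⟩
  fin_cases n <;> exact hminor _ _ (by decide)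

theorem det_submatrix_mem_span_minorVector (r : Fin 2 → Fin 2) (c : Fin 2 → Fin 4) :
    (Φ.submatrix r c).det ∈ Ideal.span (Set.range (minorVector (Φ 0) (Φ 1))) := by
  have hminor := minor_mem_span_minorVector (Φ 0) (Φ 1)
  rw [Matrix.det_fin_two]
  simp only [Matrix.submatrix_apply]
  generalize r 0 = p
  generalize r 1 = q
  fin_cases p <;> fin_cases q
  · simp [mul_comm]
  · exact hminor (c 0) (c 1)
  · simpa [mul_comm (Φ 1 _)] using hminor (c 1) (c 0)
  · simp [mul_comm]

theorem minors2_eq_range_eagonNorthcott₁ :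
    minors2 Φ = LinearMap.range (eagonNorthcott₁ (Φ 0) (Φ 1)) := by
  rw [range_eagonNorthcott₁_eq_span]
  refine le_antisymm (Ideal.span_le.2 ?_) (Ideal.span_le.2 ?_)
  · rintro _ ⟨r, c, -, -, rfl⟩
    exact det_submatrix_mem_span_minorVector Φ r c
  · rintro _ ⟨n, rfl⟩
    exact minorVector_mem_minors2 Φ n

variable {Φ}

theorem minorVector_mem {a b : Fin 4 → R} {K : Ideal R} (ha : ∀ i, a i ∈ K) (n : Fin 6) :
    minorVector a b n ∈ K := by
  fin_cases n <;> exact sub_mem (K.mul_mem_right _ (ha _)) (K.mul_mem_right _ (ha _))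

theorem isGrade3PerfectOfFormat_minors2 [IsLocalRing R] (hΦ : ∀ i j, Φ i j ∈ maximalIdeal R)
    {x y z : R} (hx : x ∈ minors2 Φ) (hy : y ∈ minors2 Φ) (hz : z ∈ minors2 Φ)
    (h : IsRegular R [x, y, z]) : IsGrade3PerfectOfFormat (minors2 Φ) 6 3 := by
  refine ⟨⟨x, y, z, hx, hy, hz, h⟩, by norm_num, by norm_num, ?_⟩
  rw [minors2_eq_range_eagonNorthcott₁] at *
  have hxyz := isWeaklyRegular_quotient_bot.2 h.toIsWeaklyRegular
  have hxy := (isWeaklyRegular_quotient_append (L := [x, y])).1 hxyz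
  have hx' := (isWeaklyRegular_quotient_append (L := [x])).1 hxyz
  refine ⟨_, _, _, rfl,
    (exactModulo_eagonNorthcott₂₁ hx hy hz hxyz).exact eagonNorthcott₁_comp_eagonNorthcott₂,
    (exactModulo_eagonNorthcott₃₂ hx hy hxy.1).exact eagonNorthcott₂_comp_eagonNorthcott₃, ?_, ?_,
    range_eagonNorthcott₂_le (hΦ 0) (hΦ 1), range_eagonNorthcott₃_le (hΦ 0) (hΦ 1)⟩
  · rw [← (exactModulo_eagonNorthcott₃ hx hx'.1).exact fun _ => map_zero _, LinearMap.range_zero]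
  · rw [range_eagonNorthcott₁_eq_span, Ideal.span_le]
    rintro _ ⟨n, rfl⟩
    exact minorVector_mem (hΦ 0) n

end Minors

/-! ### Socles and Gorenstein ideals of dimension zero -/

section Socle

variable {R : Type*} [CommRing R]

theorem mem_sup_span_of_mul_sub_mul_mem {K : Ideal R} {y z u v : R}
    (hy : IsSMulRegular (R ⧸ K) y) (huv : y * v - z * u ∈ K)
    (hu : u ∈ K ⊔ Ideal.span {y}) : v ∈ K ⊔ Ideal.span {z} := by
  obtain ⟨w, hw⟩ := mem_sup_span_singleton.1 hu
  refine mem_sup_span_singleton.2 ⟨w, mem_of_mul_mem hy ?_⟩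
  convert K.add_mem huv (K.mul_mem_left z hw) using 1
  ring

variable [IsLocalRing R]

/-- The preimage in `R` of the socle of `R/K`. -/
def socle (K : Ideal R) : Ideal R :=
  Submodule.colon K (maximalIdeal R : Set R)

theorem mem_socle {K : Ideal R} {u : R} : u ∈ socle K ↔ ∀ r ∈ maximalIdeal R, r * u ∈ K := by
  simp only [socle, Submodule.mem_colon, SetLike.mem_coe, smul_eq_mul, mul_comm u]

/-- The socle of `R/K` is at most one-dimensional. -/
def HasCyclicSocle (K : Ideal R) : Prop :=
  ∀ u ∈ socle K, ∀ v ∈ socle K, u ∉ K → ∃ r, v - r * u ∈ K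

/-- `K` is a Gorenstein ideal of dimension zero: `R/K` is Artinian with a one-dimensional socle. -/
structure IsArtinianGorenstein (K : Ideal R) : Prop where
  exists_pow_le : ∃ n, maximalIdeal R ^ n ≤ K
  hasCyclicSocle : HasCyclicSocle K

theorem socle_le_of_isSMulRegular {K : Ideal R} {x : R} (hx : x ∈ maximalIdeal R)
    (h : IsSMulRegular (R ⧸ K) x) : socle K ≤ K :=
  fun _ hu => mem_of_mul_mem h (mem_socle.1 hu x hx)

theorem not_socle_le_of_pow_le {K : Ideal R} {n : ℕ} (hn : maximalIdeal R ^ n ≤ K) (hK : K ≠ ⊤) :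
    ¬ socle K ≤ K := by
  intro h
  apply hK
  induction n with
  | zero => simpa using hn
  | succ n ih =>
    refine ih fun u hu => h (mem_socle.2 fun r hr => hn ?_)
    rw [pow_succ']
    exact Ideal.mul_mem_mul hr hu

/-- Multiplication by `y / z` carries the socle of `R/(K, z)` into that of `R/(K, y)`. -/
theorem exists_mem_socle_of_isSMulRegular {K : Ideal R} {y z : R} (hy : y ∈ maximalIdeal R)
    (hz : IsSMulRegular (R ⧸ K) z) {v : R} (hv : v ∈ socle (K ⊔ Ideal.span {z})) :
    ∃ u ∈ socle (K ⊔ Ideal.span {y}), y * v - z * u ∈ K := by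
  obtain ⟨u, hu⟩ := mem_sup_span_singleton.1 (mem_socle.1 hv y hy)
  refine ⟨u, mem_socle.2 fun r hr => ?_, hu⟩
  obtain ⟨w, hw⟩ := mem_sup_span_singleton.1 (mem_socle.1 hv r hr)
  refine mem_sup_span_singleton.2 ⟨w, mem_of_mul_mem hz ?_⟩
  convert K.sub_mem (K.mul_mem_left y hw) (K.mul_mem_left r hu) using 1
  ring

theorem socle_le_sup_span_of_isSMulRegular {K : Ideal R} {y z : R} (hy : y ∈ maximalIdeal R)
    (ry : IsSMulRegular (R ⧸ K) y) (rz : IsSMulRegular (R ⧸ K) z)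
    (h : socle (K ⊔ Ideal.span {y}) ≤ K ⊔ Ideal.span {y}) :
    socle (K ⊔ Ideal.span {z}) ≤ K ⊔ Ideal.span {z} := by
  intro v hv
  obtain ⟨u, hu, huv⟩ := exists_mem_socle_of_isSMulRegular hy rz hv
  exact mem_sup_span_of_mul_sub_mul_mem ry huv (h hu)

theorem HasCyclicSocle.sup_span_of_isSMulRegular {K : Ideal R} {y z : R} (hy : y ∈ maximalIdeal R)
    (ry : IsSMulRegular (R ⧸ K) y) (rz : IsSMulRegular (R ⧸ K) z)
    (h : HasCyclicSocle (K ⊔ Ideal.span {y})) : HasCyclicSocle (K ⊔ Ideal.span {z}) := by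
  intro v₁ hv₁ v₂ hv₂ hne
  obtain ⟨u₁, hu₁, h₁⟩ := exists_mem_socle_of_isSMulRegular hy rz hv₁
  obtain ⟨u₂, hu₂, h₂⟩ := exists_mem_socle_of_isSMulRegular hy rz hv₂
  obtain ⟨r, hr⟩ := h u₁ hu₁ u₂ hu₂ fun hu => hne (mem_sup_span_of_mul_sub_mul_mem ry h₁ hu)
  refine ⟨r, mem_sup_span_of_mul_sub_mul_mem ry ?_ hr⟩
  convert K.sub_mem h₂ (K.mul_mem_left r h₁) using 1
  ring

theorem hasCyclicSocle_maximalIdeal : HasCyclicSocle (maximalIdeal R) := by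
  intro u _ v _ hu
  obtain ⟨u, rfl⟩ := not_not.1 hu
  exact ⟨v * ↑u⁻¹, by simp⟩

end Socle

section Exchange

variable {R : Type*} [CommRing R] [IsNoetherianRing R]

theorem isSMulRegular_of_forall_notMem_associatedPrimes {K : Ideal R} {x : R}
    (h : ∀ P ∈ associatedPrimes R (R ⧸ K), x ∉ P) : IsSMulRegular (R ⧸ K) x := by
  by_contra hx
  have hmem : x ∈ ⋃ P ∈ associatedPrimes R (R ⧸ K), (P : Set R) := by
    rw [biUnion_associatedPrimes_eq_compl_regular]
    exact hx
  obtain ⟨P, hP, hxP⟩ := Set.mem_iUnion₂.1 hmem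
  exact h P hP hxP

variable [IsLocalRing R]

theorem not_maximalIdeal_le_of_mem_associatedPrimes {K : Ideal R} (h : socle K ≤ K) {P : Ideal R}
    (hP : P ∈ associatedPrimes R (R ⧸ K)) : ¬ maximalIdeal R ≤ P := by
  intro hle
  obtain ⟨hprime, x, hx⟩ := isAssociatedPrime_iff.1 (AssociatedPrimes.mem_iff.1 hP)
  obtain ⟨u, rfl⟩ := Ideal.Quotient.mk_surjective x
  have hmem (r : R) : r ∈ P ↔ r * u ∈ K := by
    rw [hx, Submodule.mem_colon_singleton, Submodule.mem_bot, Algebra.smul_def,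
      Ideal.Quotient.algebraMap_eq, ← map_mul, Ideal.Quotient.eq_zero_iff_mem]
  apply hprime.ne_top
  rw [Ideal.eq_top_iff_one, hmem, one_mul]
  exact h (mem_socle.2 fun r hr => (hmem r).1 (hle hr))

theorem exists_isSMulRegular_quotient_quotient {A B : Ideal R} (hA : socle A ≤ A)
    (hB : socle B ≤ B) :
    ∃ w ∈ maximalIdeal R, IsSMulRegular (R ⧸ A) w ∧ IsSMulRegular (R ⧸ B) w := by
  have hfin : (associatedPrimes R (R ⧸ A) ∪ associatedPrimes R (R ⧸ B)).Finite :=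
    (associatedPrimes.finite R _).union (associatedPrimes.finite R _)
  have havoid :
      ¬ ((maximalIdeal R : Set R) ⊆ ⋃ p ∈ (hfin.toFinset : Set (Ideal R)), (p : Set R)) := by
    rw [Ideal.subset_union_prime ⊥ ⊥ fun P hP _ _ => (hfin.mem_toFinset.1 hP).elim
      IsAssociatedPrime.isPrime IsAssociatedPrime.isPrime]
    rintro ⟨P, hP, hle⟩
    rcases hfin.mem_toFinset.1 hP with hP | hP
    · exact not_maximalIdeal_le_of_mem_associatedPrimes hA hP hle
    · exact not_maximalIdeal_le_of_mem_associatedPrimes hB hP hle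
  obtain ⟨w, hw, hw'⟩ := Set.not_subset.1 havoid
  simp only [Set.mem_iUnion, not_exists, Set.Finite.coe_toFinset] at hw'
  exact ⟨w, hw, isSMulRegular_of_forall_notMem_associatedPrimes fun P hP => hw' P (Or.inl hP),
    isSMulRegular_of_forall_notMem_associatedPrimes fun P hP => hw' P (Or.inr hP)⟩

/-- Two regular sequences `L, y` and `L', z` of the same length are joined through
`L, w` and `L', w`, where `w` is regular modulo both `L` and `L'`. -/
theorem sup_ofList_of_sup_ofList {P : Ideal R → Prop}
    (hP : ∀ (K : Ideal R) (y z : R), y ∈ maximalIdeal R → IsSMulRegular (R ⧸ K) y →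
      IsSMulRegular (R ⧸ K) z → P (K ⊔ Ideal.span {y}) → P (K ⊔ Ideal.span {z}))
    (K : Ideal R) (L L' : List R) (hlen : L.length = L'.length)
    (hL : ∀ y ∈ L, y ∈ maximalIdeal R) (hL' : ∀ y ∈ L', y ∈ maximalIdeal R)
    (hreg : IsWeaklyRegular (R ⧸ K) L) (hreg' : IsWeaklyRegular (R ⧸ K) L')
    (h : P (K ⊔ Ideal.ofList L)) : P (K ⊔ Ideal.ofList L') := by
  induction L using List.reverseRecOn generalizing K L' with
  | nil => rwa [List.length_eq_zero_iff.1 hlen.symm]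
  | append_singleton L l ih =>
    obtain rfl | ⟨L', l', rfl⟩ := L'.eq_nil_or_concat
    · simp at hlen
    have hlen : L.length = L'.length := by simpa using hlen
    have hl := hL l (by simp)
    have hl' := hL' l' (by simp)
    replace hL : ∀ y ∈ L, y ∈ maximalIdeal R := fun y hy => hL y (by simp [hy])
    replace hL' : ∀ y ∈ L', y ∈ maximalIdeal R := fun y hy => hL' y (by simp [hy])
    simp only [List.concat_eq_append, isWeaklyRegular_quotient_append, Ideal.ofList_append,
      Ideal.ofList_singleton, isWeaklyRegular_singleton_iff, ← sup_assoc] at hreg hreg' h ⊢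
    obtain ⟨w, hw, wL, wL'⟩ := exists_isSMulRegular_quotient_quotient
      (socle_le_of_isSMulRegular hl hreg.2) (socle_le_of_isSMulRegular hl' hreg'.2)
    have rotate {M : List R} (hM : ∀ y ∈ M, y ∈ maximalIdeal R) (h : IsWeaklyRegular (R ⧸ K) M)
        (hwM : IsSMulRegular (R ⧸ K ⊔ Ideal.ofList M) w) :
        IsWeaklyRegular (R ⧸ K ⊔ Ideal.span {w}) M := by
      refine (isWeaklyRegular_quotient_cons.1 (isWeaklyRegular_of_perm_of_subset_maximalIdeal
        (isWeaklyRegular_quotient_append.2 ⟨h, ?_⟩) (List.perm_append_singleton w M)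
        (by simpa [or_imp, forall_and] using ⟨hM, hw⟩))).2
      rwa [isWeaklyRegular_singleton_iff]
    have h₁ := hP _ l w hl hreg.2 wL h
    rw [sup_right_comm] at h₁
    have h₂ := ih _ L' hlen hL hL' (rotate hL hreg.1 wL) (rotate hL' hreg'.1 wL') h₁
    rw [sup_right_comm] at h₂
    exact hP _ w l' hw wL' hreg'.2 h₂

end Exchange

/-- `X` is a regular system of parameters: a regular sequence generating the maximal ideal. -/
structure IsRegularSystemOfParameters {R : Type*} [CommRing R] [IsLocalRing R] (X : List R) :
    Prop where
  isWeaklyRegular : IsWeaklyRegular R X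
  ofList_eq : Ideal.ofList X = maximalIdeal R

namespace IsRegularSystemOfParameters

variable {R : Type*} [CommRing R] [IsLocalRing R] {X L : List R}

theorem mem_maximalIdeal (hX : IsRegularSystemOfParameters X) {y : R} (hy : y ∈ X) :
    y ∈ maximalIdeal R :=
  hX.ofList_eq ▸ Ideal.subset_span hy

variable [IsNoetherianRing R]

theorem socle_le_ofList (hX : IsRegularSystemOfParameters X) (hL : IsWeaklyRegular R L)
    (hLm : ∀ y ∈ L, y ∈ maximalIdeal R) (h : L.length < X.length) :
    socle (Ideal.ofList L) ≤ Ideal.ofList L := by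
  have hX₁ := hX.isWeaklyRegular
  rw [← X.take_append_drop L.length, List.drop_eq_getElem_cons h, ← isWeaklyRegular_quotient_bot,
    isWeaklyRegular_quotient_append, isWeaklyRegular_quotient_cons] at hX₁
  rw [← bot_sup_eq (Ideal.ofList L)]
  exact sup_ofList_of_sup_ofList (P := fun K => socle K ≤ K)
    (fun K y z => socle_le_sup_span_of_isSMulRegular) ⊥ (X.take L.length) L
    (by simpa using h.le) (fun y hy => hX.mem_maximalIdeal (List.mem_of_mem_take hy)) hLm hX₁.1
    (isWeaklyRegular_quotient_bot.2 hL)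
    (socle_le_of_isSMulRegular (hX.mem_maximalIdeal (List.getElem_mem h)) hX₁.2.1)

theorem hasCyclicSocle_ofList (hX : IsRegularSystemOfParameters X) (hL : IsWeaklyRegular R L)
    (hLm : ∀ y ∈ L, y ∈ maximalIdeal R) (h : L.length = X.length) :
    HasCyclicSocle (Ideal.ofList L) := by
  rw [← bot_sup_eq (Ideal.ofList L)]
  refine sup_ofList_of_sup_ofList (P := HasCyclicSocle)
    (fun K y z => HasCyclicSocle.sup_span_of_isSMulRegular) ⊥ X L h.symm
    (fun y => hX.mem_maximalIdeal) hLm (isWeaklyRegular_quotient_bot.2 hX.isWeaklyRegular)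
    (isWeaklyRegular_quotient_bot.2 hL) ?_
  rw [bot_sup_eq, hX.ofList_eq]
  exact hasCyclicSocle_maximalIdeal

theorem ringKrullDim_quotient_ofList (hX : IsRegularSystemOfParameters X)
    (hL : IsWeaklyRegular R L) (hLm : ∀ y ∈ L, y ∈ maximalIdeal R) (h : L.length = X.length) :
    ringKrullDim (R ⧸ Ideal.ofList L) = 0 := by
  have dimL := ringKrullDim_add_length_eq_ringKrullDim_of_isRegular L
    ((isRegular_iff_isWeaklyRegular_of_subset_maximalIdeal hLm).2 hL)
  have dimX := ringKrullDim_add_length_eq_ringKrullDim_of_isRegular X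
    ((isRegular_iff_isWeaklyRegular_of_subset_maximalIdeal fun y => hX.mem_maximalIdeal).2
      hX.isWeaklyRegular)
  have dim_residue : ringKrullDim (R ⧸ Ideal.ofList X) = 0 := by
    rw [hX.ofList_eq]
    let _ := Ideal.Quotient.field (maximalIdeal R)
    exact ringKrullDim_eq_zero_of_field (R ⧸ maximalIdeal R)
  rw [← dimX, dim_residue, h] at dimL
  exact ENat.WithBot.add_natCast_cancel.1 dimL

theorem isArtinianGorenstein_ofList (hX : IsRegularSystemOfParameters X)
    (hL : IsWeaklyRegular R L) (hLm : ∀ y ∈ L, y ∈ maximalIdeal R) (h : L.length = X.length) :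
    IsArtinianGorenstein (Ideal.ofList L) where
  exists_pow_le := by
    have : Ring.KrullDimLE 0 (R ⧸ Ideal.ofList L) :=
      Ring.krullDimLE_iff.2 (hX.ringKrullDim_quotient_ofList hL hLm h).le
    have : IsArtinianRing (R ⧸ Ideal.ofList L) := isArtinianRing_iff_krullDimLE_zero.2 this
    exact exists_maximalIdeal_pow_le_of_isArtinianRing_quotient _
  hasCyclicSocle := hX.hasCyclicSocle_ofList hL hLm h

end IsRegularSystemOfParameters

/-! ### Duality over an Artinian Gorenstein ring -/

section Length

variable {R : Type*} [CommRing R] {M N P S : Type*} [AddCommGroup M] [Module R M]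
  [AddCommGroup N] [Module R N] [AddCommGroup P] [Module R P] [AddCommGroup S] [Module R S]

theorem length_hom_eq_add_of_exact (S : Type*) [AddCommGroup S] [Module R S] {i : N →ₗ[R] M}
    {p : M →ₗ[R] P} (hp : Function.Surjective p) (h : Function.Exact i p) :
    Module.length R (M →ₗ[R] S) = Module.length R (P →ₗ[R] S) +
      Module.length R (LinearMap.range (LinearMap.lcomp R S i)) := by
  refine Module.length_eq_add_of_exact (LinearMap.lcomp R S p)
    (LinearMap.lcomp R S i).rangeRestrict (LinearMap.lcomp_injective_of_surjective p hp)
    (LinearMap.surjective_rangeRestrict _) fun f => ?_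
  rw [← LinearMap.exact_lcomp_of_exact_of_surjective S h hp f, ← LinearMap.mem_ker,
    LinearMap.ker_rangeRestrict, LinearMap.mem_ker]

theorem length_eq_ker_add_range (g : M →ₗ[R] P) :
    Module.length R M =
      Module.length R (LinearMap.ker g) + Module.length R (LinearMap.range g) :=
  Module.length_eq_add_of_exact (LinearMap.ker g).subtype g.rangeRestrict
    (Submodule.subtype_injective _) g.surjective_rangeRestrict fun x => by
      rw [← LinearMap.exact_subtype_ker_map g x, Subtype.ext_iff]
      rfl

theorem length_submodule_le_of_forall_eq_zero {A : Submodule R M} {B : Submodule R N}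
    (f : A →ₗ[R] N) (hf : ∀ a, f a ∈ B) (h : ∀ a, f a = 0 → a = 0) :
    Module.length R A ≤ Module.length R B :=
  Module.length_le_of_injective (f.codRestrict B hf)
    ((LinearMap.injective_codRestrict_iff hf).2 ((injective_iff_map_eq_zero f).2 h))

end Length

section Duality

variable {R : Type*} [CommRing R]

theorem smul_mk {K : Ideal R} (r c : R) :
    r • Ideal.Quotient.mk K c = Ideal.Quotient.mk K (r * c) :=
  rfl

theorem smul_quotient_eq_zero {I : Ideal R} {r : R} (hr : r ∈ I) (t : R ⧸ I) : r • t = 0 := by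
  obtain ⟨t, rfl⟩ := Ideal.Quotient.mk_surjective t
  exact Ideal.Quotient.eq_zero_iff_mem.2 (I.mul_mem_right t hr)

theorem exists_extend_sup_span_singleton {M : Type*} [AddCommGroup M] [Module R M] {A : Ideal R}
    (f : A →ₗ[R] M) (w : R) (m : M) (H : ∀ r (h : r * w ∈ A), f ⟨r * w, h⟩ = r • m) :
    ∃ g : (A ⊔ Ideal.span {w} : Ideal R) →ₗ[R] M,
      (∀ a (h : a ∈ A), g ⟨a, Ideal.mem_sup_left h⟩ = f ⟨a, h⟩) ∧
      g ⟨w, Ideal.mem_sup_right (Ideal.mem_span_singleton_self w)⟩ = m := by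
  let f₁ : R →ₗ.[R] M := ⟨A, f⟩
  have hz (r : R) (hr : r • w = 0) : r • m = 0 := by
    have hrw : r * w ∈ A := by
      rw [← smul_eq_mul, hr]
      exact A.zero_mem
    rw [← H r hrw, show (⟨r * w, hrw⟩ : A) = 0 from Subtype.ext hr, map_zero]
  let f₂ : R →ₗ.[R] M := LinearPMap.mkSpanSingleton' w m hz
  have agree : ∀ (x : f₁.domain) (y : f₂.domain), (x : R) = y → f₁ x = f₂ y := by
    rintro ⟨x, hx⟩ ⟨y, hy⟩ (rfl : x = y)
    obtain ⟨r, rfl⟩ := Submodule.mem_span_singleton.1 hy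
    exact (H r hx).trans (LinearPMap.mkSpanSingleton'_apply w m hz r hy).symm
  have hw : w ∈ f₂.domain := Ideal.mem_span_singleton_self w
  refine ⟨(f₁.sup f₂ agree).toFun, fun a ha => ?_, ?_⟩
  · have h := LinearPMap.sup_apply agree ⟨a, ha⟩ 0 ⟨a, Ideal.mem_sup_left ha⟩ (add_zero a)
    rwa [LinearPMap.map_zero, add_zero] at h
  · have h := LinearPMap.sup_apply agree 0 ⟨w, hw⟩ ⟨w, Ideal.mem_sup_right hw⟩ (zero_add w)
    rw [LinearPMap.map_zero, zero_add] at h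
    exact h.trans (LinearPMap.mkSpanSingleton'_apply_self w m hz hw)

variable [IsLocalRing R] {K : Ideal R}

theorem HasCyclicSocle.exists_smul_eq (hK : HasCyclicSocle K) {M : Type*} [AddCommGroup M]
    [Module R M] [IsSimpleModule R M] {f : M →ₗ[R] R ⧸ K} (hf : f ≠ 0) (g : M →ₗ[R] R ⧸ K) :
    ∃ r : R, r • f = g := by
  obtain ⟨x, hx⟩ := DFunLike.ne_iff.1 hf
  have hx₀ : x ≠ 0 := by
    rintro rfl
    simp at hx
  have mem_socle_of_mk_eq (φ : M →ₗ[R] R ⧸ K) (w : R) (hw : Ideal.Quotient.mk K w = φ x) :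
      w ∈ socle K := mem_socle.2 fun r hr => by
    rw [← eq_maximalIdeal (IsSimpleModule.annihilator_isMaximal (R := R) (M := M))] at hr
    rw [← Ideal.Quotient.eq_zero_iff_mem, ← smul_mk, hw, ← map_smul,
      Module.mem_annihilator.1 hr x, map_zero]
  obtain ⟨u, hu⟩ := Ideal.Quotient.mk_surjective (f x)
  obtain ⟨v, hv⟩ := Ideal.Quotient.mk_surjective (g x)
  obtain ⟨r, hr⟩ := hK u (mem_socle_of_mk_eq f u hu) v (mem_socle_of_mk_eq g v hv) (by
    rwa [← Ideal.Quotient.eq_zero_iff_mem, hu])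
  refine ⟨r, LinearMap.ext fun y => ?_⟩
  obtain ⟨c, rfl⟩ := IsSimpleModule.toSpanSingleton_surjective R hx₀ y
  have hrx : r • f x = g x := by
    rw [← hu, ← hv, smul_mk, eq_comm, Ideal.Quotient.mk_eq_mk_iff_sub_mem]
    exact hr
  rw [LinearMap.toSpanSingleton_apply, map_smul, map_smul, LinearMap.smul_apply, hrx]

theorem HasCyclicSocle.length_hom_le_one (hK : HasCyclicSocle K) (M : Type*) [AddCommGroup M]
    [Module R M] [IsSimpleModule R M] : Module.length R (M →ₗ[R] R ⧸ K) ≤ 1 := by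
  rcases subsingleton_or_nontrivial (M →ₗ[R] R ⧸ K) with _ | hnt
  · simp
  · have : IsSimpleModule R (M →ₗ[R] R ⧸ K) :=
      isSimpleModule_iff_toSpanSingleton_surjective.2 ⟨hnt, fun _ hf g => hK.exists_smul_eq hf g⟩
    rw [Module.length_eq_one]

theorem HasCyclicSocle.length_hom_le (hK : HasCyclicSocle K) {M : Type*} [AddCommGroup M]
    [Module R M] (hM : IsFiniteLength R M) :
    Module.length R (M →ₗ[R] R ⧸ K) ≤ Module.length R M := by
  induction hM with
  | of_subsingleton => simp
  | @of_simple_quotient M _ _ N _ _ ih =>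
    rw [length_hom_eq_add_of_exact _ N.mkQ_surjective (LinearMap.exact_subtype_mkQ N),
      Module.length_eq_add_of_exact N.subtype N.mkQ N.subtype_injective N.mkQ_surjective
        (LinearMap.exact_subtype_mkQ N), Module.length_eq_one R (M ⧸ N), add_comm]
    exact add_le_add ((Module.length_le_of_injective _ (Submodule.subtype_injective _)).trans ih)
      (hK.length_hom_le_one _)

variable [IsNoetherianRing R]

theorem isFiniteLength_quotient_of_pow_le {n : ℕ} (h : maximalIdeal R ^ n ≤ K) :
    IsFiniteLength R (R ⧸ K) := by
  have : IsArtinianRing (R ⧸ K) := by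
    rw [isArtinianRing_iff_krullDimLE_zero,
      Ideal.krullDimLE_zero_quotient_iff_forall_minimalPrimes_isMaximal]
    intro P hP
    have := hP.1.1
    rw [← (maximalIdeal.isMaximal R).eq_of_le this.ne_top (this.le_of_pow_le (h.trans hP.1.2))]
    exact maximalIdeal.isMaximal R
  rw [← Module.length_ne_top_iff, Module.length_eq_of_surjective
    (R := R ⧸ K) Ideal.Quotient.mk_surjective]
  exact Module.length_ne_top (R := R ⧸ K) (M := R ⧸ K)

namespace IsArtinianGorenstein

theorem isFiniteLength_quotient (hK : IsArtinianGorenstein K) : IsFiniteLength R (R ⧸ K) :=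
  have ⟨_, hn⟩ := hK.exists_pow_le
  isFiniteLength_quotient_of_pow_le hn

/-- Self-injectivity of `R/K`: since `ℓ(Hom(N, R/K)) ≤ ℓ(N)` for all `N`, counting lengths along
`0 → M → R/K → C → 0` leaves no room for the restriction map not to be surjective. -/
theorem exists_comp_eq_of_injective (hK : IsArtinianGorenstein K) {M : Type*} [AddCommGroup M]
    [Module R M] {i : M →ₗ[R] R ⧸ K} (hi : Function.Injective i) (f : M →ₗ[R] R ⧸ K) :
    ∃ g : (R ⧸ K) →ₗ[R] R ⧸ K, g ∘ₗ i = f := by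
  have hfl := hK.isFiniteLength_quotient
  let C := (R ⧸ K) ⧸ LinearMap.range i
  have hC : IsFiniteLength R C := hfl.of_surjective (Submodule.mkQ_surjective _)
  have hM : IsFiniteLength R M := hfl.of_injective hi
  have hHom : IsFiniteLength R (M →ₗ[R] R ⧸ K) := Module.length_ne_top_iff.1
    (ne_top_of_le_ne_top (Module.length_ne_top_iff.2 hM) (hK.hasCyclicSocle.length_hom_le hM))
  let ρ := LinearMap.lcomp R (R ⧸ K) i
  have hend : Module.length R (R ⧸ K) ≤ Module.length R ((R ⧸ K) →ₗ[R] R ⧸ K) :=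
    Module.length_le_of_injective (LinearMap.mul R (R ⧸ K)) fun a b hab => by
      simpa using LinearMap.congr_fun hab 1
  have hle : Module.length R (M →ₗ[R] R ⧸ K) ≤ Module.length R (LinearMap.range ρ) := by
    refine (hK.hasCyclicSocle.length_hom_le hM).trans ?_
    rw [← ENat.add_le_add_iff_left (Module.length_ne_top_iff.2 hC)]
    calc Module.length R C + Module.length R M
        = Module.length R (R ⧸ K) := by
          rw [add_comm, ← Module.length_eq_add_of_exact i (LinearMap.range i).mkQ hi
            (Submodule.mkQ_surjective _) (LinearMap.exact_map_mkQ_range i)]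
      _ ≤ Module.length R (C →ₗ[R] R ⧸ K) + Module.length R (LinearMap.range ρ) := by
          rwa [← length_hom_eq_add_of_exact _ (Submodule.mkQ_surjective _)
            (LinearMap.exact_map_mkQ_range i)]
      _ ≤ Module.length R C + Module.length R (LinearMap.range ρ) := by
          gcongr
          exact hK.hasCyclicSocle.length_hom_le hC
  have htop : LinearMap.range ρ = ⊤ := by
    by_contra hne
    obtain ⟨_, _⟩ := isFiniteLength_iff_isNoetherian_isArtinian.1 hHom
    exact (Submodule.length_lt hne).not_ge hle
  exact LinearMap.range_eq_top.1 htop f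

end IsArtinianGorenstein

/-- The homomorphisms `A → R/K` vanishing on `A ∩ K`. -/
def vanishingHoms {R : Type*} [CommRing R] (K A : Ideal R) :
    Submodule R (A →ₗ[R] R ⧸ K) where
  carrier := {f | ∀ a : A, (a : R) ∈ K → f a = 0}
  add_mem' hf hg a ha := by rw [LinearMap.add_apply, hf a ha, hg a ha, add_zero]
  zero_mem' _ _ := rfl
  smul_mem' c f hf a ha := by rw [LinearMap.smul_apply, hf a ha, smul_zero]

/-- The inclusion generates `Hom(A/(A ∩ K), R/K)`: every homomorphism `A → R/K` that vanishes on
`A ∩ K` is multiplication by an element of `R`. -/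
def HomsAreMultiplications {R : Type*} [CommRing R] (K A : Ideal R) : Prop :=
  ∀ f ∈ vanishingHoms K A, ∃ s : R, ∀ a : A, f a = Ideal.Quotient.mk K (s * a)

namespace IsArtinianGorenstein

theorem homsAreMultiplications (hK : IsArtinianGorenstein K) (A : Ideal R) :
    HomsAreMultiplications K A := by
  intro f hf
  let N : Submodule R A := Submodule.comap A.subtype K
  let i : (A ⧸ N) →ₗ[R] R ⧸ K := N.mapQ K A.subtype le_rfl
  have hi : Function.Injective i :=
    LinearMap.ker_eq_bot.1 (Submodule.ker_mapQ N K A.subtype le_rfl ▸ Submodule.mkQ_map_self N)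
  obtain ⟨g, hg⟩ := hK.exists_comp_eq_of_injective hi (N.liftQ f fun a ha => hf a ha)
  obtain ⟨s, hs⟩ := Ideal.Quotient.mk_surjective (g 1)
  refine ⟨s, fun a => ?_⟩
  calc f a = g (i (Submodule.Quotient.mk a)) :=
        (LinearMap.congr_fun hg (Submodule.Quotient.mk a)).symm
    _ = g ((a : R) • 1) := by
        rw [Algebra.smul_def, mul_one]
        rfl
    _ = Ideal.Quotient.mk K (s * a) := by rw [map_smul, ← hs, smul_mk, mul_comm]

theorem mem_of_forall_mul_mem (hK : IsArtinianGorenstein K) {A : Ideal R} (hKA : K ≤ A) {s : R}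
    (hs : ∀ c, (∀ a ∈ A, c * a ∈ K) → c * s ∈ K) : s ∈ A := by
  by_contra hsA
  obtain ⟨n, hn⟩ := hK.exists_pow_le
  obtain ⟨u, hu, huK⟩ := SetLike.not_le_iff_exists.1 (not_socle_le_of_pow_le hn fun hK =>
    hsA (hKA (hK ▸ Submodule.mem_top)))
  have mem_of_mul_mem (r : R) (hr : r * s ∈ A) : r ∈ maximalIdeal R := by
    by_contra hrn
    exact hsA ((Ideal.unit_mul_mem_iff_mem A (not_not.1 hrn)).1 hr)
  -- Extend `0` on `A` by sending `s` to a nonzero socle element of `R/K`.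
  obtain ⟨g, g_zero, g_s⟩ := exists_extend_sup_span_singleton (0 : A →ₗ[R] R ⧸ K) s
    (Ideal.Quotient.mk K u) fun r hr => by
      rw [LinearMap.zero_apply, smul_mk,
        Ideal.Quotient.eq_zero_iff_mem.2 (mem_socle.1 hu r (mem_of_mul_mem r hr))]
  obtain ⟨t, ht⟩ := hK.homsAreMultiplications _ g fun a ha => by simpa using g_zero a (hKA ha)
  have hts : t * s ∈ K := hs t fun a ha => by
    rw [← Ideal.Quotient.eq_zero_iff_mem, ← ht ⟨a, Ideal.mem_sup_left ha⟩, g_zero a ha,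
      LinearMap.zero_apply]
  apply huK
  rwa [← Ideal.Quotient.eq_zero_iff_mem, ← g_s, ht, Ideal.Quotient.eq_zero_iff_mem]

end IsArtinianGorenstein

end Duality

/-! ### Colon ideals modulo a regular sequence -/

section Colon

variable {R : Type*} [CommRing R] {K A : Ideal R} {l : R}

theorem exists_smul_eq_of_isSMulRegular {M N : Type*} [AddCommGroup M] [Module R M]
    [AddCommGroup N] [Module R N] (hl : IsSMulRegular N l) (g : M →ₗ[R] N)
    (hg : ∀ m, ∃ t, l • t = g m) : ∃ f : M →ₗ[R] N, l • f = g :=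
  ⟨LinearMap.codRestrictOfInjective g (LinearMap.lsmul R N l) hl hg,
    LinearMap.codRestrictOfInjective_comp g (LinearMap.lsmul R N l) hl hg⟩

theorem mem_colon_iff {c : R} :
    c ∈ Submodule.colon K (A : Set R) ↔ ∀ a ∈ A, c * a ∈ K :=
  Submodule.mem_colon

theorem mem_vanishingHoms_of_smul_mem (hl : IsSMulRegular (R ⧸ K) l) {f : A →ₗ[R] R ⧸ K}
    (hf : l • f ∈ vanishingHoms K A) : f ∈ vanishingHoms K A :=
  fun a ha => hl.right_eq_zero_of_smul (hf a ha)

theorem smul_mkQ_comp_subtype_mem_vanishingHoms (s : R) :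
    s • K.mkQ ∘ₗ A.subtype ∈ vanishingHoms K A :=
  fun _ ha => Ideal.Quotient.eq_zero_iff_mem.2 (K.mul_mem_left s ha)

theorem exists_mem_vanishingHoms_sup_span (hKA : K ≤ A) (rA : IsSMulRegular (R ⧸ A) l)
    {f : A →ₗ[R] R ⧸ K} (hf : f ∈ vanishingHoms K A) :
    ∃ g ∈ vanishingHoms (K ⊔ Ideal.span {l}) (A ⊔ Ideal.span {l}), ∀ a : A,
      g ⟨a, Ideal.mem_sup_left a.2⟩ = Submodule.factor (le_sup_left : K ≤ _) (f a) := by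
  let π : (R ⧸ K) →ₗ[R] R ⧸ K ⊔ Ideal.span {l} := Submodule.factor le_sup_left
  obtain ⟨g, g_A, g_l⟩ := exists_extend_sup_span_singleton (π ∘ₗ f) l 0 fun r hr => by
    have hrA : r ∈ A := mem_of_mul_mem rA (by rwa [mul_comm])
    rw [show (⟨r * l, hr⟩ : A) = l • ⟨r, hrA⟩ from Subtype.ext (mul_comm _ _), map_smul,
      smul_quotient_eq_zero (Ideal.mem_sup_right (Ideal.mem_span_singleton_self l)), smul_zero]
  refine ⟨g, ?_, fun a => g_A a a.2⟩
  rintro ⟨a, ha⟩ (haK : a ∈ K ⊔ Ideal.span {l})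
  obtain ⟨w, hw⟩ := mem_sup_span_singleton.1 haK
  have decomp : (⟨a, ha⟩ : (A ⊔ Ideal.span {l} : Ideal R)) =
      ⟨a - l * w, Ideal.mem_sup_left (hKA hw)⟩ +
        w • ⟨l, Ideal.mem_sup_right (Ideal.mem_span_singleton_self l)⟩ :=
    Subtype.ext (by simp [mul_comm])
  rw [decomp, map_add, map_smul, g_l, smul_zero, add_zero, g_A _ (hKA hw), LinearMap.comp_apply,
    hf _ hw, map_zero]

theorem exists_smul_eq_sub_smul (rK : IsSMulRegular (R ⧸ K) l) (rA : IsSMulRegular (R ⧸ A) l)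
    (hKA : K ≤ A) (h : HomsAreMultiplications (K ⊔ Ideal.span {l}) (A ⊔ Ideal.span {l}))
    {f : A →ₗ[R] R ⧸ K} (hf : f ∈ vanishingHoms K A) :
    ∃ s : R, ∃ f₁ ∈ vanishingHoms K A, l • f₁ = f - s • K.mkQ ∘ₗ A.subtype := by
  obtain ⟨g, hg, g_apply⟩ := exists_mem_vanishingHoms_sup_span hKA rA hf
  obtain ⟨s, hs⟩ := h g hg
  obtain ⟨f₁, hf₁⟩ := exists_smul_eq_of_isSMulRegular rK (f - s • K.mkQ ∘ₗ A.subtype) fun a => by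
    obtain ⟨t, ht⟩ := Ideal.Quotient.mk_surjective (f a)
    have hta : Ideal.Quotient.mk (K ⊔ Ideal.span {l}) t = Ideal.Quotient.mk _ (s * a) := by
      rw [← hs ⟨a, Ideal.mem_sup_left a.2⟩, g_apply, ← ht]
      rfl
    obtain ⟨w, hw⟩ := mem_sup_span_singleton.1 ((Ideal.Quotient.mk_eq_mk_iff_sub_mem _ _).1 hta)
    refine ⟨Ideal.Quotient.mk K w, Eq.symm ?_⟩
    rw [LinearMap.sub_apply, ← ht, smul_mk]
    exact (Ideal.Quotient.mk_eq_mk_iff_sub_mem _ _).2 hw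
  exact ⟨s, f₁, mem_vanishingHoms_of_smul_mem rK
    (hf₁ ▸ Submodule.sub_mem _ hf (smul_mkQ_comp_subtype_mem_vanishingHoms s)), hf₁⟩

theorem isSMulRegular_quotient_colon (rK : IsSMulRegular (R ⧸ K) l) :
    IsSMulRegular (R ⧸ Submodule.colon K (A : Set R)) l :=
  (isSMulRegular_quotient_iff_mem_of_smul_mem _ _).2 fun c hc => mem_colon_iff.2 fun a ha =>
    mem_of_mul_mem rK (mul_assoc l c a ▸ mem_colon_iff.1 hc a ha)

theorem HomsAreMultiplications.colon_sup_span (rK : IsSMulRegular (R ⧸ K) l)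
    (h : HomsAreMultiplications K A) :
    Submodule.colon (K ⊔ Ideal.span {l}) ((A ⊔ Ideal.span {l} : Ideal R) : Set R) =
      Submodule.colon K (A : Set R) ⊔ Ideal.span {l} := by
  ext c
  rw [mem_colon_iff, mem_sup_span_singleton]
  constructor
  · intro hc
    -- Multiplication by `c` maps `A` into `l • (R/K)`, and its quotient by `l` is a multiplication.
    obtain ⟨f, hf⟩ := exists_smul_eq_of_isSMulRegular rK (c • K.mkQ ∘ₗ A.subtype) fun a => by
      obtain ⟨w, hw⟩ := mem_sup_span_singleton.1 (hc a (Ideal.mem_sup_left a.2))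
      exact ⟨Ideal.Quotient.mk K w, ((Ideal.Quotient.mk_eq_mk_iff_sub_mem _ _).2 hw).symm⟩
    obtain ⟨s, hs⟩ := h f (mem_vanishingHoms_of_smul_mem rK
      (hf ▸ smul_mkQ_comp_subtype_mem_vanishingHoms c))
    refine ⟨s, mem_colon_iff.2 fun a ha => ?_⟩
    have hfa := LinearMap.congr_fun hf ⟨a, ha⟩
    rw [LinearMap.smul_apply, hs, smul_mk] at hfa
    convert (Ideal.Quotient.mk_eq_mk_iff_sub_mem _ _).1 hfa.symm using 1
    simp only [smul_eq_mul, Submodule.subtype_apply]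
    ring
  · rintro ⟨w, hw⟩ a ha
    obtain ⟨v, hv⟩ := mem_sup_span_singleton.1 ha
    refine mem_sup_span_singleton.2 ⟨c * v + w * (a - l * v), ?_⟩
    convert mem_colon_iff.1 hw _ hv using 1
    ring

variable [IsLocalRing R] [IsNoetherianRing R]

theorem HomsAreMultiplications.of_sup_span (hKA : K ≤ A) (hl : l ∈ maximalIdeal R)
    (rK : IsSMulRegular (R ⧸ K) l) (rA : IsSMulRegular (R ⧸ A) l)
    (h : HomsAreMultiplications (K ⊔ Ideal.span {l}) (A ⊔ Ideal.span {l})) :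
    HomsAreMultiplications K A := by
  have hle : vanishingHoms K A ≤ Submodule.span R {K.mkQ ∘ₗ A.subtype} := by
    refine Submodule.le_of_le_smul_of_le_jacobson_bot (I := Ideal.span {l})
      (IsNoetherian.noetherian _) ?_ fun f hf => ?_
    · rwa [jacobson_eq_maximalIdeal ⊥ bot_ne_top, Ideal.span_singleton_le_iff_mem]
    · obtain ⟨s, f₁, hf₁, hs⟩ := exists_smul_eq_sub_smul rK rA hKA h hf
      rw [← add_eq_of_eq_sub' hs]
      exact Submodule.add_mem_sup (Submodule.smul_mem _ _ (Submodule.mem_span_singleton_self _))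
        (Submodule.smul_mem_smul (Ideal.mem_span_singleton_self l) hf₁)
  intro f hf
  obtain ⟨s, rfl⟩ := Submodule.mem_span_singleton.1 (hle hf)
  exact ⟨s, fun a => rfl⟩

theorem HomsAreMultiplications.of_sup_ofList {L : List R} (hKA : K ≤ A)
    (hL : ∀ y ∈ L, y ∈ maximalIdeal R) (rK : IsWeaklyRegular (R ⧸ K) L)
    (rA : IsWeaklyRegular (R ⧸ A) L)
    (h : ∀ B, HomsAreMultiplications (K ⊔ Ideal.ofList L) B) : HomsAreMultiplications K A := by
  induction L generalizing K A with
  | nil => simpa using h A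
  | cons l L ih =>
    simp only [isWeaklyRegular_quotient_cons, Ideal.ofList_cons, ← sup_assoc,
      List.forall_mem_cons] at rK rA h hL
    exact .of_sup_span hKA hL.1 rK.1 rA.1 (ih (sup_le_sup_right hKA _) hL.2 rK.2 rA.2 h)

theorem colon_sup_ofList {L : List R} (hKA : K ≤ A) (hL : ∀ y ∈ L, y ∈ maximalIdeal R)
    (rK : IsWeaklyRegular (R ⧸ K) L) (rA : IsWeaklyRegular (R ⧸ A) L)
    (h : ∀ B, HomsAreMultiplications (K ⊔ Ideal.ofList L) B) :
    IsWeaklyRegular (R ⧸ Submodule.colon K (A : Set R)) L ∧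
      Submodule.colon (K ⊔ Ideal.ofList L) ((A ⊔ Ideal.ofList L : Ideal R) : Set R) =
        Submodule.colon K (A : Set R) ⊔ Ideal.ofList L := by
  induction L generalizing K A with
  | nil => simp
  | cons l L ih =>
    have hom := HomsAreMultiplications.of_sup_ofList hKA hL rK rA h
    simp only [isWeaklyRegular_quotient_cons, Ideal.ofList_cons, ← sup_assoc,
      List.forall_mem_cons] at rK rA h hL ⊢
    have := ih (sup_le_sup_right hKA (Ideal.span {l})) hL.2 rK.2 rA.2 h
    rw [hom.colon_sup_span rK.1] at this
    exact ⟨⟨isSMulRegular_quotient_colon rK.1, this.1⟩, this.2⟩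

end Colon

/-! ### The excess of an ideal and its invariance under linkage -/

section LechIndependent

variable {R : Type*} [CommRing R] {ι : Type*} {x : ι → R} {M : Type*} [AddCommGroup M]
  [Module R M]

/-- The family `x` is independent in the sense of Lech: the coefficients of its linear relations
lie in the ideal generated by `x`. Equivalently, the classes of the `x k` form a basis of the
conormal module `X/X²` over `R/X`, where `X` is that ideal. -/
def IsLechIndependent [Fintype ι] (x : ι → R) : Prop :=
  ∀ c : ι → R, ∑ k, c k * x k = 0 → ∀ k, c k ∈ Ideal.span (Set.range x)

/-- The generators `x k`, as elements of the ideal generated by them. -/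
def generator (x : ι → R) (k : ι) : Ideal.span (Set.range x) :=
  ⟨x k, Ideal.subset_span ⟨k, rfl⟩⟩

theorem span_range_generator : Submodule.span R (Set.range (generator x)) = ⊤ :=
  (Submodule.span_range_subtype_eq_top_iff _ _).2 rfl

/-- Evaluation of homomorphisms at the generators `x k`. -/
def evalGenerators (x : ι → R) (M : Type*) [AddCommGroup M] [Module R M] :
    (Ideal.span (Set.range x) →ₗ[R] M) →ₗ[R] ι → M :=
  LinearMap.pi fun k => LinearMap.applyₗ (generator x k)

theorem evalGenerators_injective : Function.Injective (evalGenerators x M) :=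
  fun _ _ h => LinearMap.ext_on_range span_range_generator fun k => congrFun h k

variable [Fintype ι]

theorem mem_range_evalGenerators {v : ι → M}
    (hv : ∀ c : ι → R, ∑ k, c k * x k = 0 → ∀ k, c k • v k = 0) :
    v ∈ LinearMap.range (evalGenerators x M) := by
  classical
  let p := Fintype.linearCombination R (generator x)
  have hp : Function.Surjective p := LinearMap.range_eq_top.1 (by
    rw [Fintype.range_linearCombination, span_range_generator])
  have hker : LinearMap.ker p ≤ LinearMap.ker (Fintype.linearCombination R v) := fun c hc =>
    Finset.sum_eq_zero fun k _ => hv c (by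
      simpa [p, Fintype.linearCombination_apply, generator] using congrArg Subtype.val hc) k
  refine ⟨(LinearMap.ker p).liftQ _ hker ∘ₗ (p.quotKerEquivOfSurjective hp).symm.toLinearMap,
    funext fun k => ?_⟩
  have hk : generator x k =
      p.quotKerEquivOfSurjective hp (Submodule.Quotient.mk (Pi.single k 1)) := by
    simp [p]
  change (LinearMap.ker p).liftQ _ hker ((p.quotKerEquivOfSurjective hp).symm (generator x k)) = _
  rw [hk, LinearEquiv.symm_apply_apply, Submodule.liftQ_apply,
    Fintype.linearCombination_apply_single, one_smul]

theorem IsLechIndependent.evalGenerators_surjective (hx : IsLechIndependent x)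
    (hM : ∀ r ∈ Ideal.span (Set.range x), ∀ m : M, r • m = 0) :
    Function.Surjective (evalGenerators x M) :=
  fun _ => mem_range_evalGenerators fun c hc k => hM _ (hx c hc k) _

theorem length_pi_eq_card_mul : Module.length R (ι → M) = Fintype.card ι * Module.length R M := by
  simp [Module.length_pi_of_fintype]

theorem IsLechIndependent.length_hom (hx : IsLechIndependent x)
    (hM : ∀ r ∈ Ideal.span (Set.range x), ∀ m : M, r • m = 0) :
    Module.length R (Ideal.span (Set.range x) →ₗ[R] M) = Fintype.card ι * Module.length R M := by
  rw [← length_pi_eq_card_mul]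
  exact (LinearEquiv.ofBijective (evalGenerators x M)
    ⟨evalGenerators_injective, hx.evalGenerators_surjective hM⟩).length_eq

theorem IsLechIndependent.compRight_factor_surjective (hx : IsLechIndependent x) {I : Ideal R}
    (hXI : Ideal.span (Set.range x) ≤ I) :
    Function.Surjective ((Submodule.factor hXI).compRight R (M := Ideal.span (Set.range x))) := by
  intro f
  choose w hw using fun k => Submodule.factor_surjective hXI (f (generator x k))
  obtain ⟨g, hg⟩ := hx.evalGenerators_surjective (fun r hr => smul_quotient_eq_zero hr) w
  refine ⟨g, evalGenerators_injective (funext fun k => ?_)⟩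
  exact (congrArg (Submodule.factor hXI) (congrFun hg k)).trans (hw k)

end LechIndependent

section Excess

variable {R : Type*} [CommRing R]

/-- The ideal `I` has excess over `n` if `Hom(I, R/I)` is longer than that of an ideal generated
by a regular sequence of length `n` and of the same colength. -/
def HasExcess (n : ℕ) (I : Ideal R) : Prop :=
  n * Module.length R (R ⧸ I) < Module.length R (I →ₗ[R] R ⧸ I)

theorem not_hasExcess_span_range {ι : Type*} [Fintype ι] (x : ι → R) :
    ¬ HasExcess (Fintype.card ι) (Ideal.span (Set.range x)) :=
  not_lt.2 ((Module.length_le_of_injective _ evalGenerators_injective).trans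
    length_pi_eq_card_mul.le)

/-- The pairs of homomorphisms `φ : I → R/I` and `ψ : X → R/X` that agree as maps `X → R/I`. -/
def compatibleHoms {X I : Ideal R} (hXI : X ≤ I) :
    Submodule R ((I →ₗ[R] R ⧸ I) × (X →ₗ[R] R ⧸ X)) :=
  LinearMap.ker ((LinearMap.lcomp R _ (Submodule.inclusion hXI)).coprod
    (-(Submodule.factor hXI).compRight R))

theorem mem_compatibleHoms {X I : Ideal R} {hXI : X ≤ I} {p : (I →ₗ[R] R ⧸ I) × (X →ₗ[R] R ⧸ X)} :
    p ∈ compatibleHoms hXI ↔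
      ∀ a : X, p.1 (Submodule.inclusion hXI a) = Submodule.factor hXI (p.2 a) := by
  rw [compatibleHoms, LinearMap.mem_ker, LinearMap.ext_iff]
  exact forall_congr' fun a => add_neg_eq_zero

theorem IsLechIndependent.hasExcess_iff {ι : Type*} [Fintype ι] {x : ι → R}
    (hx : IsLechIndependent x) {I : Ideal R} (hXI : Ideal.span (Set.range x) ≤ I)
    (hfin : IsFiniteLength R (R ⧸ Ideal.span (Set.range x))) :
    HasExcess (Fintype.card ι) I ↔
      Fintype.card ι * Module.length R (R ⧸ Ideal.span (Set.range x)) <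
        Module.length R (compatibleHoms hXI) := by
  have hsurj : Function.Surjective ((LinearMap.lcomp R _ (Submodule.inclusion hXI)).coprod
      (-(Submodule.factor hXI).compRight R)) := fun f => by
    obtain ⟨g, hg⟩ := hx.compRight_factor_surjective hXI f
    exact ⟨(0, -g), by simpa using hg⟩
  have hlen := length_eq_ker_add_range ((LinearMap.lcomp R _ (Submodule.inclusion hXI)).coprod
      (-(Submodule.factor hXI).compRight R))
  rw [LinearMap.range_eq_top.2 hsurj, Module.length_top, Module.length_prod,
    hx.length_hom fun r hr => smul_quotient_eq_zero hr,
    hx.length_hom fun r hr => smul_quotient_eq_zero (hXI hr)] at hlen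
  have hX : Fintype.card ι * Module.length R (R ⧸ Ideal.span (Set.range x)) ≠ ⊤ :=
    WithTop.mul_ne_top (ENat.natCast_ne_top _) (Module.length_ne_top_iff.2 hfin)
  have hI : Fintype.card ι * Module.length R (R ⧸ I) ≠ ⊤ :=
    WithTop.mul_ne_top (ENat.natCast_ne_top _)
      (Module.length_ne_top_iff.2 (hfin.of_surjective (Submodule.factor_surjective hXI)))
  rw [HasExcess, ← ENat.add_lt_add_iff_right hX, hlen, add_comm, ENat.add_lt_add_iff_right hI]
  rfl

end Excess

section Link

variable {R : Type*} [CommRing R] {X I J : Ideal R}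

/-- Multiplication `R/J → Hom(I, R/X)` by elements of `R`, for `I * J ≤ X`. -/
def quotientHom (h : J ≤ Submodule.colon X (I : Set R)) : (R ⧸ J) →ₗ[R] I →ₗ[R] R ⧸ X :=
  J.liftQ (LinearMap.toSpanSingleton R _ (X.mkQ ∘ₗ I.subtype)) fun _ hc =>
    LinearMap.ext fun a => Ideal.Quotient.eq_zero_iff_mem.2 (mem_colon_iff.1 (h hc) a a.2)

theorem quotientHom_mk (h : J ≤ Submodule.colon X (I : Set R)) (s : R) (a : I) :
    quotientHom h (Ideal.Quotient.mk J s) a = Ideal.Quotient.mk X (s * a) :=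
  rfl

theorem quotientHom_factor (h : J ≤ Submodule.colon X (I : Set R)) (hXJ : X ≤ J) (t : R ⧸ X)
    (a : I) : quotientHom h (Submodule.factor hXJ t) a = (a : R) • t := by
  obtain ⟨t, rfl⟩ := Ideal.Quotient.mk_surjective t
  rw [smul_mk, mul_comm]
  rfl

theorem quotientHom_apply_of_mem (h : J ≤ Submodule.colon X (I : Set R)) (t : R ⧸ J) {a : I}
    (ha : (a : R) ∈ X) : quotientHom h t a = 0 := by
  obtain ⟨t, rfl⟩ := Ideal.Quotient.mk_surjective t
  exact Ideal.Quotient.eq_zero_iff_mem.2 (X.mul_mem_left t ha)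

theorem quotientHom_injective :
    Function.Injective (quotientHom (le_refl (Submodule.colon X (I : Set R)))) := by
  refine (injective_iff_map_eq_zero _).2 fun s hs => ?_
  obtain ⟨s, rfl⟩ := Ideal.Quotient.mk_surjective s
  exact Ideal.Quotient.eq_zero_iff_mem.2 (mem_colon_iff.2 fun a ha =>
    Ideal.Quotient.eq_zero_iff_mem.1 (LinearMap.congr_fun hs ⟨a, ha⟩))

theorem HomsAreMultiplications.vanishingHoms_le_range (h : HomsAreMultiplications X I) :
    vanishingHoms X I ≤
      LinearMap.range (quotientHom (le_refl (Submodule.colon X (I : Set R)))) := fun f hf =>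
  have ⟨s, hs⟩ := h f hf
  ⟨Ideal.Quotient.mk _ s, LinearMap.ext fun a => (hs a).symm⟩

theorem le_colon_colon :
    I ≤ Submodule.colon X ((Submodule.colon X (I : Set R) : Ideal R) : Set R) :=
  fun a ha => mem_colon_iff.2 fun c hc => mul_comm c a ▸ mem_colon_iff.1 hc a ha

theorem le_colon : X ≤ Submodule.colon X (I : Set R) :=
  fun _ hc => mem_colon_iff.2 fun a _ => X.mul_mem_right a hc

/-- The multiplication map `J × I → X`, for `I * J ≤ X`. -/
def mulHom (h : J ≤ Submodule.colon X (I : Set R)) : J →ₗ[R] I →ₗ[R] X :=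
  LinearMap.mk₂ R (fun j i => ⟨j * i, mem_colon_iff.1 (h j.2) i i.2⟩)
    (fun _ _ _ => Subtype.ext (add_mul _ _ _)) (fun _ _ _ => Subtype.ext (mul_assoc _ _ _))
    (fun _ _ _ => Subtype.ext (mul_add _ _ _)) (fun _ _ _ => Subtype.ext (mul_left_comm _ _ _))

/-- The bilinear map `(j, i) ↦ ψ(j i) - j φ(i)` attached to a pair `(φ, ψ)`. -/
def leibnizDefect (X I : Ideal R) : ((I →ₗ[R] R ⧸ I) × (X →ₗ[R] R ⧸ X)) →ₗ[R]
    Submodule.colon X (I : Set R) →ₗ[R] I →ₗ[R] R ⧸ X where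
  toFun p := (mulHom le_rfl).compr₂ p.2 - (quotientHom le_colon_colon ∘ₗ p.1).flip
  map_add' p q := by
    ext
    simp only [Prod.snd_add, Prod.fst_add, LinearMap.sub_apply, LinearMap.compr₂_apply,
      LinearMap.add_apply, LinearMap.flip_apply, LinearMap.comp_apply, map_add]
    abel
  map_smul' r p := by
    ext
    simp [smul_sub]

theorem leibnizDefect_apply (p : (I →ₗ[R] R ⧸ I) × (X →ₗ[R] R ⧸ X))
    (j : Submodule.colon X (I : Set R)) (i : I) :
    leibnizDefect X I p j i =
      p.2 (mulHom le_rfl j i) - quotientHom le_colon_colon (p.1 i) j :=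
  rfl

theorem leibnizDefect_mem_vanishingHoms {hXI : X ≤ I}
    {p : (I →ₗ[R] R ⧸ I) × (X →ₗ[R] R ⧸ X)} (hp : p ∈ compatibleHoms hXI)
    (j : Submodule.colon X (I : Set R)) : leibnizDefect X I p j ∈ vanishingHoms X I := by
  intro a ha
  have hmul : mulHom le_rfl j a = (j : R) • (⟨a, ha⟩ : X) := rfl
  have hφ : p.1 a = Submodule.factor hXI (p.2 ⟨a, ha⟩) := mem_compatibleHoms.1 hp ⟨a, ha⟩
  rw [leibnizDefect_apply, hmul, hφ, quotientHom_factor, map_smul, sub_self]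

theorem HomsAreMultiplications.exists_quotientHom_comp_eq_leibnizDefect
    (h : HomsAreMultiplications X I) {hXI : X ≤ I} {p : (I →ₗ[R] R ⧸ I) × (X →ₗ[R] R ⧸ X)}
    (hp : p ∈ compatibleHoms hXI) :
    ∃ φ : Submodule.colon X (I : Set R) →ₗ[R] R ⧸ Submodule.colon X (I : Set R),
      quotientHom le_rfl ∘ₗ φ = leibnizDefect X I p :=
  ⟨LinearMap.codRestrictOfInjective _ _ quotientHom_injective fun j =>
    h.vanishingHoms_le_range (leibnizDefect_mem_vanishingHoms hp j),
    LinearMap.codRestrictOfInjective_comp ..⟩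

/-- The Leibniz rule `ψ(j i) = j φ(i) + i φ'(j)` turns `φ : I → R/I` into `φ' : J → R/J`, where
`J = X : I`. -/
theorem HomsAreMultiplications.exists_leibniz_transfer (h : HomsAreMultiplications X I)
    (hXI : X ≤ I) : ∃ T : compatibleHoms hXI →ₗ[R]
        Submodule.colon X (I : Set R) →ₗ[R] R ⧸ Submodule.colon X (I : Set R),
      ∀ p, quotientHom le_rfl ∘ₗ T p = leibnizDefect X I p := by
  let G := (quotientHom (le_refl (Submodule.colon X (I : Set R)))).compRight R
    (M := Submodule.colon X (I : Set R))
  have hG : Function.Injective G := fun f g hfg =>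
    LinearMap.ext fun j => quotientHom_injective (LinearMap.congr_fun hfg j)
  let D := leibnizDefect X I ∘ₗ (compatibleHoms hXI).subtype
  have hD (p) : D p ∈ LinearMap.range G := h.exists_quotientHom_comp_eq_leibnizDefect p.2
  exact ⟨D.codRestrictOfInjective G hG hD, D.codRestrictOfInjective_comp_apply G hG hD⟩

theorem mk_mem_compatibleHoms_colon {p : (I →ₗ[R] R ⧸ I) × (X →ₗ[R] R ⧸ X)}
    {φ : Submodule.colon X (I : Set R) →ₗ[R] R ⧸ Submodule.colon X (I : Set R)}
    (hφ : quotientHom le_rfl ∘ₗ φ = leibnizDefect X I p) :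
    (φ, p.2) ∈ compatibleHoms (le_colon (X := X) (I := I)) := by
  refine mem_compatibleHoms.2 fun a => quotientHom_injective (LinearMap.ext fun i => ?_)
  have hmul : mulHom le_rfl (Submodule.inclusion le_colon a) i = (i : R) • a :=
    Subtype.ext (mul_comm _ _)
  rw [← LinearMap.comp_apply, hφ, leibnizDefect_apply, hmul, map_smul,
    quotientHom_apply_of_mem (a := Submodule.inclusion le_colon a) _ _ a.2, sub_zero,
    quotientHom_factor]

variable [IsLocalRing R] [IsNoetherianRing R]

theorem IsArtinianGorenstein.eq_zero_of_leibnizDefect_eq_zero (hX : IsArtinianGorenstein X)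
    (hXI : X ≤ I) {φ : I →ₗ[R] R ⧸ I} (h : leibnizDefect X I (φ, 0) = 0) : φ = 0 := by
  ext i
  obtain ⟨t, ht⟩ := Ideal.Quotient.mk_surjective (φ i)
  rw [← ht, LinearMap.zero_apply, Ideal.Quotient.eq_zero_iff_mem]
  refine hX.mem_of_forall_mul_mem hXI fun j hj => ?_
  have hji := LinearMap.congr_fun (LinearMap.congr_fun h ⟨j, mem_colon_iff.2 hj⟩) i
  rw [leibnizDefect_apply, LinearMap.zero_apply, zero_sub, LinearMap.zero_apply,
    LinearMap.zero_apply, neg_eq_zero, ← ht, quotientHom_mk, Ideal.Quotient.eq_zero_iff_mem] at hji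
  rwa [mul_comm]

theorem IsArtinianGorenstein.length_compatibleHoms_le (hX : IsArtinianGorenstein X)
    (hXI : X ≤ I) : Module.length R (compatibleHoms hXI) ≤
      Module.length R (compatibleHoms (le_colon (X := X) (I := I))) := by
  obtain ⟨T, hT⟩ := (hX.homsAreMultiplications I).exists_leibniz_transfer hXI
  let S := T.prod (LinearMap.snd R _ _ ∘ₗ (compatibleHoms hXI).subtype)
  refine length_submodule_le_of_forall_eq_zero S
    (fun p => mk_mem_compatibleHoms_colon (hT p)) ?_
  rintro ⟨⟨φ, ψ⟩, hp⟩ h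
  obtain ⟨hTp, rfl⟩ : T ⟨(φ, ψ), hp⟩ = 0 ∧ ψ = 0 := Prod.ext_iff.1 h
  have hφ : φ = 0 := hX.eq_zero_of_leibnizDefect_eq_zero hXI (by
    rw [← hT ⟨(φ, 0), hp⟩, hTp, LinearMap.comp_zero])
  subst hφ
  rfl

theorem HasExcess.colon {ι : Type*} [Fintype ι] {x : ι → R}
    (hX : IsArtinianGorenstein (Ideal.span (Set.range x))) (hx : IsLechIndependent x)
    (hXI : Ideal.span (Set.range x) ≤ I) (hI : HasExcess (Fintype.card ι) I) :
    HasExcess (Fintype.card ι) (Submodule.colon (Ideal.span (Set.range x)) (I : Set R)) :=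
  (hx.hasExcess_iff le_colon hX.isFiniteLength_quotient).2
    (((hx.hasExcess_iff hXI hX.isFiniteLength_quotient).1 hI).trans_le
      (hX.length_compatibleHoms_le hXI))

end Link

/-! ### Links modulo a regular sequence -/

section Reduction

variable {R : Type*} [CommRing R]

theorem ofList_ofFn {n : ℕ} (x : Fin n → R) :
    Ideal.ofList (List.ofFn x) = Ideal.span (Set.range x) :=
  congrArg Ideal.span (Set.ext fun _ => List.mem_ofFn' x _)

theorem isLechIndependent_of_isWeaklyRegular {n : ℕ} {x : Fin n → R}
    (h : IsWeaklyRegular R (List.ofFn x)) : IsLechIndependent x := by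
  induction n with
  | zero => exact fun _ _ k => k.elim0
  | succ n ih =>
    intro c hc
    set X := Ideal.span (Set.range x)
    set z := x (Fin.last n)
    have hmem (k : Fin (n + 1)) : x k ∈ X := Ideal.subset_span ⟨k, rfl⟩
    have hle : Ideal.span (Set.range fun j : Fin n => x j.castSucc) ≤ X :=
      Ideal.span_mono (Set.range_comp_subset_range Fin.castSucc x)
    rw [List.ofFn_succ', List.concat_eq_append, ← isWeaklyRegular_quotient_bot,
      isWeaklyRegular_quotient_append, isWeaklyRegular_singleton_iff, isWeaklyRegular_quotient_bot,
      bot_sup_eq, ofList_ofFn] at h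
    rw [Fin.sum_univ_castSucc] at hc
    have hlast : c (Fin.last n) ∈ Ideal.span (Set.range fun j : Fin n => x j.castSucc) := by
      refine mem_of_mul_mem h.2 ?_
      rw [mul_comm, eq_neg_of_add_eq_zero_right hc]
      exact neg_mem (Ideal.sum_mem _ fun j _ => Ideal.mul_mem_left _ _ (Ideal.subset_span ⟨j, rfl⟩))
    obtain ⟨b, hb⟩ := Ideal.mem_span_range_iff_exists_fun.1 hlast
    have hsum : ∑ j : Fin n, (c j.castSucc + b j * z) * x j.castSucc = 0 := by
      rw [← hc, ← hb, Finset.sum_mul, ← Finset.sum_add_distrib]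
      exact Finset.sum_congr rfl fun j _ => by ring
    refine Fin.lastCases (hle hlast) fun j => ?_
    exact (Ideal.add_mem_iff_left _ (Ideal.mul_mem_left _ _ (hmem _))).1 (hle (ih h.1 _ hsum j))

variable {S : Type*} [CommRing S] {π : R →+* S}

theorem mem_map_iff_mem_sup_ker (hπ : Function.Surjective π) {A : Ideal R} {a : R} :
    π a ∈ A.map π ↔ a ∈ A ⊔ RingHom.ker π := by
  rw [← Ideal.mem_comap, Ideal.comap_map_of_surjective' π hπ]

theorem colon_map_of_surjective (hπ : Function.Surjective π) {K A J : Ideal R}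
    (hJ : Submodule.colon (K ⊔ RingHom.ker π) ((A ⊔ RingHom.ker π : Ideal R) : Set R) =
      J ⊔ RingHom.ker π) :
    Submodule.colon (K.map π) (A.map π : Set S) = J.map π := by
  ext s
  obtain ⟨c, rfl⟩ := hπ s
  rw [mem_map_iff_mem_sup_ker hπ, ← hJ, mem_colon_iff, mem_colon_iff, hπ.forall]
  simp only [← map_mul, mem_map_iff_mem_sup_ker hπ]

variable [IsLocalRing R] [IsLocalRing S]

theorem mem_socle_map_iff (hπ : Function.Surjective π) {K : Ideal R} {u : R} :
    π u ∈ socle (K.map π) ↔ u ∈ socle (K ⊔ RingHom.ker π) := by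
  have := IsLocalHom.of_surjective π hπ
  have hmax (r : R) : π r ∈ maximalIdeal S ↔ r ∈ maximalIdeal R := by
    rw [← Ideal.mem_comap, maximalIdeal_comap]
  simp only [mem_socle, hπ.forall, ← map_mul, mem_map_iff_mem_sup_ker hπ, hmax]

theorem IsArtinianGorenstein.map (hπ : Function.Surjective π) {K : Ideal R}
    (hK : IsArtinianGorenstein (K ⊔ RingHom.ker π)) : IsArtinianGorenstein (K.map π) where
  exists_pow_le := by
    obtain ⟨n, hn⟩ := hK.exists_pow_le
    refine ⟨n, ?_⟩
    rw [← map_maximalIdeal_of_surjective π hπ, ← Ideal.map_pow, Ideal.map_le_iff_le_comap,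
      Ideal.comap_map_of_surjective' π hπ]
    exact hn
  hasCyclicSocle := by
    intro u hu v hv huK
    obtain ⟨u, rfl⟩ := hπ u
    obtain ⟨v, rfl⟩ := hπ v
    obtain ⟨r, hr⟩ := hK.hasCyclicSocle u ((mem_socle_map_iff hπ).1 hu) v
      ((mem_socle_map_iff hπ).1 hv) fun h => huK ((mem_map_iff_mem_sup_ker hπ).2 h)
    exact ⟨π r, by rwa [← map_mul, ← map_sub, mem_map_iff_mem_sup_ker hπ]⟩

end Reduction

section Chain

variable {R : Type*} [CommRing R] [IsLocalRing R]

theorem mem_maximalIdeal_of_isRegular {L : List R} (hL : IsRegular R L) :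
    ∀ y ∈ L, y ∈ maximalIdeal R := fun y hy =>
  le_maximalIdeal (J := Ideal.ofList L) (fun h => hL.top_ne_smul (by simp [h]))
    (Ideal.subset_span hy)

theorem isLocalRing_quotient_ofList {L : List R} (hL : ∀ y ∈ L, y ∈ maximalIdeal R) :
    IsLocalRing (R ⧸ Ideal.ofList L) :=
  have : Nontrivial (R ⧸ Ideal.ofList L) := Ideal.Quotient.nontrivial_iff.2
    (ne_top_of_le_ne_top (Ideal.IsPrime.ne_top inferInstance) (Ideal.span_le.2 hL))
  IsLocalRing.of_surjective' (Ideal.Quotient.mk _) Ideal.Quotient.mk_surjective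

variable [IsNoetherianRing R]

theorem isLechIndependent_quotient_ofList {n : ℕ} {x : Fin n → R} {L : List R}
    (h : IsWeaklyRegular R (List.ofFn x ++ L)) (hxL : ∀ y ∈ List.ofFn x ++ L, y ∈ maximalIdeal R) :
    IsLechIndependent (Ideal.Quotient.mk (Ideal.ofList L) ∘ x) := by
  have hLx := isWeaklyRegular_of_perm_of_subset_maximalIdeal h List.perm_append_comm hxL
  rw [← isWeaklyRegular_quotient_bot, isWeaklyRegular_quotient_append, bot_sup_eq] at hLx
  refine isLechIndependent_of_isWeaklyRegular ?_
  rw [← List.map_ofFn]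
  exact (isWeaklyRegular_map_algebraMap_iff (R ⧸ Ideal.ofList L) _ _).2 hLx.2

theorem IsRegularSystemOfParameters.hasExcess_map_colon {X L : List R}
    (hX : IsRegularSystemOfParameters X) {n : ℕ} {x : Fin n → R} {I : Ideal R}
    (hxI : Ideal.span (Set.range x) ≤ I) (h : IsWeaklyRegular R (List.ofFn x ++ L))
    (hxL : ∀ y ∈ List.ofFn x ++ L, y ∈ maximalIdeal R) (hlen : n + L.length = X.length)
    (hLI : IsWeaklyRegular (R ⧸ I) L) :
    IsWeaklyRegular (R ⧸ Submodule.colon (Ideal.span (Set.range x)) (I : Set R)) L ∧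
      (HasExcess n (I.map (Ideal.Quotient.mk (Ideal.ofList L))) →
        HasExcess n ((Submodule.colon (Ideal.span (Set.range x)) (I : Set R)).map
          (Ideal.Quotient.mk (Ideal.ofList L)))) := by
  have hL : ∀ y ∈ L, y ∈ maximalIdeal R := fun y hy => hxL y (List.mem_append_right _ hy)
  have := isLocalRing_quotient_ofList hL
  have hπ : Function.Surjective (Ideal.Quotient.mk (Ideal.ofList L)) :=
    Ideal.Quotient.mk_surjective
  have hG : IsArtinianGorenstein (Ideal.span (Set.range x) ⊔ Ideal.ofList L) := by
    rw [← ofList_ofFn, ← Ideal.ofList_append]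
    exact hX.isArtinianGorenstein_ofList h hxL (by simpa using hlen)
  have hLx : IsWeaklyRegular (R ⧸ Ideal.span (Set.range x)) L := by
    rw [← isWeaklyRegular_quotient_bot, isWeaklyRegular_quotient_append, bot_sup_eq,
      ofList_ofFn] at h
    exact h.2
  obtain ⟨hreg, hcolon⟩ := colon_sup_ofList hxI hL hLx hLI hG.homsAreMultiplications
  refine ⟨hreg, fun hI => ?_⟩
  have hspan : (Ideal.span (Set.range x)).map (Ideal.Quotient.mk (Ideal.ofList L)) =
      Ideal.span (Set.range (Ideal.Quotient.mk (Ideal.ofList L) ∘ x)) := by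
    rw [Ideal.map_span, Set.range_comp]
  rw [← Ideal.mk_ker (I := Ideal.ofList L)] at hG hcolon
  rw [← colon_map_of_surjective hπ hcolon, hspan]
  simpa only [Fintype.card_fin] using HasExcess.colon (hspan ▸ hG.map hπ)
    (isLechIndependent_quotient_ofList h hxL) (hspan ▸ Ideal.map_mono hxI)
    (by rwa [Fintype.card_fin])

/-- Linked ideals are compared modulo any sequence `L` that extends each of the finitely many
linking triples to a maximal regular sequence. -/
theorem IsRegularSystemOfParameters.exists_triples_of_linked {X : List R}
    (hX : IsRegularSystemOfParameters X) {I J : Ideal R} (h : Linked I J) :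
    ∃ T : Set (List R), T.Finite ∧ (∀ t ∈ T, t.length = 3 ∧ IsRegular R t) ∧
      ∀ L : List R, (∀ y ∈ L, y ∈ maximalIdeal R) → 3 + L.length = X.length →
        (∀ t ∈ T, IsWeaklyRegular R (t ++ L)) → IsWeaklyRegular (R ⧸ I) L →
        IsWeaklyRegular (R ⧸ J) L ∧ (HasExcess 3 (I.map (Ideal.Quotient.mk (Ideal.ofList L))) →
          HasExcess 3 (J.map (Ideal.Quotient.mk (Ideal.ofList L)))) := by
  unfold Linked at h
  induction h with
  | refl => exact ⟨∅, Set.finite_empty, by simp, fun L _ _ _ h => ⟨h, id⟩⟩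
  | @tail A B _ hAB ih =>
    obtain ⟨T, hTfin, hT, ih⟩ := ih
    obtain ⟨x, y, z, hx, hy, hz, hreg, rfl⟩ := hAB
    refine ⟨insert [x, y, z] T, hTfin.insert _, Set.forall_mem_insert.2 ⟨⟨rfl, hreg⟩, hT⟩,
      fun L hL hlen hTL hLI => ?_⟩
    obtain ⟨hxyzL, hTL⟩ := Set.forall_mem_insert.1 hTL
    obtain ⟨hLA, hexc⟩ := ih L hL hlen hTL hLI
    have hrange : Set.range ![x, y, z] = {x, y, z} := by
      simp only [Matrix.range_cons, Matrix.range_empty, Set.union_empty, Set.singleton_union]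
    have hle : Ideal.span (Set.range ![x, y, z]) ≤ A := by
      rw [hrange, Ideal.span_le]
      rintro _ (rfl | rfl | rfl) <;> assumption
    have hlink := hX.hasExcess_map_colon hle hxyzL
      (List.forall_mem_append.2 ⟨mem_maximalIdeal_of_isRegular hreg, hL⟩) hlen hLA
    rw [hrange] at hlink
    exact ⟨hlink.1, hlink.2 ∘ hexc⟩

end Chain

/-! ### The excess of the square of the maximal ideal -/

section Irredundant

variable {R : Type*} [CommRing R] [IsLocalRing R] {ι : Type*} [Fintype ι] {m : ι → R}

/-- The coefficients of all linear relations of the family `m` are nonunits; equivalently, `m` is a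
minimal system of generators of the ideal it generates. -/
def IsIrredundant (m : ι → R) : Prop :=
  ∀ c : ι → R, ∑ k, c k * m k = 0 → ∀ k, c k ∈ maximalIdeal R

theorem IsIrredundant.subsingleton_of_isPrincipal (hm : IsIrredundant m)
    (h : (Ideal.span (Set.range m)).IsPrincipal) : Subsingleton ι := by
  classical
  obtain ⟨w, hw⟩ := h
  replace hw : Ideal.span (Set.range m) = Ideal.span {w} := hw
  have hmw (i : ι) : m i ∈ Ideal.span {w} := hw ▸ Ideal.subset_span ⟨i, rfl⟩
  choose s hs using fun i => Ideal.mem_span_singleton'.1 (hmw i)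
  have hwm : w ∈ Ideal.span (Set.range m) := hw ▸ Ideal.mem_span_singleton_self w
  obtain ⟨r, hr⟩ := Ideal.mem_span_range_iff_exists_fun.1 hwm
  have key (i k : ι) : s i * r k - Pi.single (M := fun _ => R) i 1 k ∈ maximalIdeal R := by
    refine hm (fun k => s i * r k - Pi.single (M := fun _ => R) i 1 k) ?_ k
    simp [sub_mul, mul_assoc, ← Finset.mul_sum, hr, hs, Pi.single_apply]
  have diag (i : ι) : s i * r i ∉ maximalIdeal R := fun h => by
    simpa [sub_sub_cancel] using Ideal.sub_mem _ h (key i i)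
  refine ⟨fun i j => by_contra fun hij => ?_⟩
  have hmem : s i * r j ∈ maximalIdeal R := by
    simpa [Pi.single_eq_of_ne (Ne.symm hij)] using key i j
  rcases (inferInstance : (maximalIdeal R).IsPrime).mem_or_mem hmem with h | h
  · exact diag i (Ideal.mul_mem_right _ _ h)
  · exact diag j (Ideal.mul_mem_left _ _ h)

theorem IsIrredundant.linearIndependent (K : Type*) [Field K] [Algebra K R]
    (hm : IsIrredundant m) : LinearIndependent K m := by
  refine Fintype.linearIndependent_iff.2 fun c hc k => by_contra fun hk => ?_
  simp only [Algebra.smul_def] at hc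
  exact hm _ hc k ((isUnit_iff_ne_zero.2 hk).map (algebraMap K R))

end Irredundant

section MaximalIdealSquare

variable {R : Type*} [CommRing R] {I : Ideal R} {ι : Type*} [Fintype ι]

theorem card_mul_length_le_length_hom {x : ι → R} (hI : Ideal.span (Set.range x) = I)
    {M N : Type*} [AddCommGroup M] [Module R M] [AddCommGroup N] [Module R N] {j : N →ₗ[R] M}
    (hj : Function.Injective j)
    (hN : ∀ c : ι → R, ∑ k, c k * x k = 0 → ∀ k, ∀ v : N, c k • v = 0) :
    Fintype.card ι * Module.length R N ≤ Module.length R (I →ₗ[R] M) := by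
  subst hI
  have hrange (v : ι → N) : j.compLeft ι v ∈ LinearMap.range (evalGenerators x M) :=
    mem_range_evalGenerators fun c hc k => by
      rw [LinearMap.compLeft_apply, Function.comp_apply, ← map_smul, hN c hc, map_zero]
  calc Fintype.card ι * Module.length R N = Module.length R (ι → N) := length_pi_eq_card_mul.symm
    _ ≤ Module.length R (LinearMap.range (evalGenerators x M)) :=
        Module.length_le_of_injective ((j.compLeft ι).codRestrict _ hrange) fun v w h =>
          funext fun k => hj (congrFun (congrArg Subtype.val h) k)
    _ ≤ _ := Module.length_le_of_surjective _ (evalGenerators x M).surjective_rangeRestrict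

theorem length_quotient_sq :
    Module.length R (R ⧸ I ^ 2) = Module.length R I.Cotangent + Module.length R (R ⧸ I) := by
  refine Module.length_eq_add_of_exact I.cotangentToQuotientSquare
    (Submodule.factor (Ideal.pow_le_self two_ne_zero))
    I.cotangentToQuotientSquare_injective (Submodule.factor_surjective _) fun c => ?_
  obtain ⟨c, rfl⟩ := Ideal.Quotient.mk_surjective c
  rw [← LinearMap.coe_range, SetLike.mem_coe, Ideal.range_cotangentToQuotientSquare,
    Submodule.restrictScalars_mem, Ideal.mk_mem_cotangentIdeal]
  exact Ideal.Quotient.eq_zero_iff_mem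

variable [IsLocalRing R] [IsNoetherianRing R]

theorem length_cotangentSpace :
    Module.length R (CotangentSpace R) =
      Module.finrank (ResidueField R) (CotangentSpace R) := by
  rw [Module.length_eq_of_surjective (R := ResidueField R) residue_surjective,
    Module.length_eq_finrank]

theorem IsIrredundant.two_le_finrank_cotangentSpace {m : ι → R} (hm : IsIrredundant m)
    (hspan : Ideal.span (Set.range m) = maximalIdeal R ^ 2) (hcard : 1 < Fintype.card ι) :
    2 ≤ Module.finrank (ResidueField R) (CotangentSpace R) := by
  by_contra! h
  obtain ⟨w, hw⟩ := finrank_cotangentSpace_le_one_iff.1 (Nat.lt_succ_iff.1 h)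
  have hsq : maximalIdeal R ^ 2 = Ideal.span {w ^ 2} := by
    rw [hw]; exact Ideal.span_singleton_pow w 2
  exact hcard.not_ge (Fintype.card_le_one_iff_subsingleton.2
    (hm.subsingleton_of_isPrincipal ⟨w ^ 2, hspan.trans hsq⟩))

theorem IsIrredundant.hasExcess {m : ι → R} (hm : IsIrredundant m)
    (hspan : Ideal.span (Set.range m) = maximalIdeal R ^ 2) {n : ℕ} (hn : 0 < n)
    (hcard : 2 * n ≤ Fintype.card ι) : HasExcess n (maximalIdeal R ^ 2) := by
  have hν := hm.two_le_finrank_cotangentSpace hspan (by omega)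
  have hhom := card_mul_length_le_length_hom hspan
    (maximalIdeal R).cotangentToQuotientSquare_injective
    fun c hc k v => Ideal.Cotangent.smul_eq_zero_of_mem (hm c hc k) v
  refine lt_of_lt_of_le ?_ hhom
  rw [length_quotient_sq, length_cotangentSpace, Module.length_eq_one_iff.2
    (isSimpleModule_iff_isCoatom.2 (maximalIdeal.isMaximal R).out)]
  norm_cast
  nlinarith

end MaximalIdealSquare

section Algebra

variable {K R : Type*} [Field K] [CommRing R] [Algebra K R]

theorem finrank_mul_self_le (V : Submodule K R) [Module.Finite K V] :
    Module.finrank K (V * V : Submodule K R) ≤ (Module.finrank K V + 1).choose 2 := by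
  classical
  let b : Fin (Module.finrank K V) → R := fun i => Module.finBasis K V i
  have hb : Submodule.span K (Set.range b) = V := by
    rw [show b = V.subtype ∘ Module.finBasis K V from rfl, Set.range_comp, ← Submodule.map_span,
      (Module.finBasis K V).span_eq, Submodule.map_subtype_top]
  let q : Sym2 (Fin (Module.finrank K V)) → R := fun s => (s.map b).mul
  have hq : V * V ≤ Submodule.span K (Set.range q) := by
    conv_lhs => rw [← hb, Submodule.span_mul_span]
    refine Submodule.span_mono ?_
    rintro _ ⟨_, ⟨i, rfl⟩, _, ⟨j, rfl⟩, rfl⟩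
    exact ⟨s(i, j), rfl⟩
  have : Module.Finite K (Submodule.span K (Set.range q)) :=
    Module.Finite.span_of_finite K (Set.finite_range q)
  calc Module.finrank K (V * V : Submodule K R) ≤ (Set.range q).finrank K :=
        Submodule.finrank_mono hq
    _ ≤ Fintype.card (Sym2 (Fin (Module.finrank K V))) := finrank_range_le_card q
    _ = _ := by rw [Sym2.card, Fintype.card_fin]

theorem IsIrredundant.span_range_eq_maximalIdeal_sq [IsLocalRing R] {V : Submodule K R}
    [Module.Finite K V] (hV : Ideal.span (V : Set R) = maximalIdeal R) {ι : Type*} [Fintype ι]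
    {m : ι → R} (hm : IsIrredundant m) (hmV : ∀ k, m k ∈ V * V)
    (hcard : (Module.finrank K V + 1).choose 2 ≤ Fintype.card ι) :
    Ideal.span (Set.range m) = maximalIdeal R ^ 2 := by
  have hVfg : V.FG := Module.Finite.iff_fg.1 inferInstance
  have : Module.Finite K (V * V : Submodule K R) := Module.Finite.iff_fg.2 (hVfg.mul hVfg)
  have hspan : Submodule.span K (Set.range m) = V * V :=
    Submodule.eq_of_le_of_finrank_le (Submodule.span_le.2 (Set.range_subset_iff.2 hmV))
      ((finrank_mul_self_le V).trans
        (hcard.trans (finrank_span_eq_card (hm.linearIndependent K)).ge))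
  calc Ideal.span (Set.range m) = Ideal.span (V * V : Submodule K R) := by
        rw [← hspan]; exact (Submodule.span_span_of_tower K R _).symm
    _ = maximalIdeal R ^ 2 := by
        rw [Submodule.mul_def, ← hV, pow_two, Ideal.span_mul_span']
        exact Submodule.span_span_of_tower K R _

end Algebra

/-! ### General linear sections -/

section LinearSection

variable {R : Type*} [CommRing R]

theorem isSMulRegular_quotient_sup_range {M N : Type*} [AddCommGroup M] [Module R M]
    [AddCommGroup N] [Module R N] {f : M →ₗ[R] N} {g : N →ₗ[R] R} {K : Ideal R} {l : R}
    (hl : IsSMulRegular (R ⧸ K) l) (hgf : ∀ v, g (f v) = 0)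
    (h : ExactModulo (K ⊔ Ideal.span {l}) f g) :
    IsSMulRegular (R ⧸ LinearMap.range g ⊔ K) l := by
  refine (isSMulRegular_quotient_iff_mem_of_smul_mem _ _).2 fun c hc => ?_
  obtain ⟨_, ⟨u, rfl⟩, κ, hκ, hu⟩ := Submodule.mem_sup.1 hc
  obtain ⟨v, hv⟩ := h u (by
    rw [smul_eq_mul, Ideal.mul_top, mem_sup_span_singleton]
    exact ⟨c, by rw [← smul_eq_mul l, ← hu, sub_add_cancel_left]; exact K.neg_mem hκ⟩)
  obtain ⟨w, hw⟩ := exists_sub_smul_mem_of_mem_sup hv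
  have hgu : g u - l * g w ∈ K := by
    simpa only [map_sub, map_smul, hgf, sub_zero, smul_eq_mul, Ideal.mul_top]
      using map_mem_smul_top g hw
  have hcw : c - g w ∈ K := mem_of_mul_mem hl (by
    rw [mul_sub, ← smul_eq_mul l c, ← hu, add_sub_right_comm]
    exact K.add_mem hgu hκ)
  exact Submodule.mem_sup.2 ⟨g w, ⟨w, rfl⟩, _, hcw, add_sub_cancel _ _⟩

variable [IsLocalRing R]

theorem exists_mem_forall_notMem_of_span_eq_maximalIdeal {K : Type*} [Field K] [Infinite K]
    [Algebra K R] {V : Submodule K R} (hV : Ideal.span (V : Set R) = maximalIdeal R)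
    {A : Set (Ideal R)} (hA : A.Finite) (h : ∀ P ∈ A, ¬ maximalIdeal R ≤ P) :
    ∃ l ∈ V, ∀ P ∈ A, l ∉ P := by
  classical
  let trace (P : Ideal R) : Subspace K V := (P.restrictScalars K).comap V.subtype
  have htop : ⊤ ∉ hA.toFinset.image trace := fun htop => by
    obtain ⟨P, hP, hPtop⟩ := Finset.mem_image.1 htop
    refine h P (hA.mem_toFinset.1 hP) (hV ▸ Ideal.span_le.2 fun v hv => ?_)
    exact show (⟨v, hv⟩ : V) ∈ trace P from hPtop ▸ Submodule.mem_top
  obtain ⟨l, hl⟩ := (Set.ne_univ_iff_exists_notMem _).1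
    (Subspace.biUnion_ne_univ_of_top_notMem htop)
  refine ⟨l, l.2, fun P hP hlP => hl (Set.mem_biUnion ?_ (show l ∈ (trace P : Set V) from hlP))⟩
  exact Finset.mem_image_of_mem _ (hA.mem_toFinset.2 hP)

variable [IsNoetherianRing R]

theorem IsRegularSystemOfParameters.exists_list_isWeaklyRegular_append {X : List R}
    (hX : IsRegularSystemOfParameters X) {K : Type*} [Field K] [Infinite K] [Algebra K R]
    {V : Submodule K R} (hV : Ideal.span (V : Set R) = maximalIdeal R) {T : Set (List R)}
    (hT : T.Finite) {n : ℕ} (hTX : ∀ t ∈ T, t.length = n ∧ IsRegular R t) (m : ℕ)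
    (hm : n + m ≤ X.length) :
    ∃ L : List R, L.length = m ∧ (∀ y ∈ L, y ∈ V) ∧ ∀ t ∈ T, IsWeaklyRegular R (t ++ L) := by
  induction m with
  | zero => exact ⟨[], rfl, by simp, fun t ht => by simpa using (hTX t ht).2.toIsWeaklyRegular⟩
  | succ m ih =>
    obtain ⟨L, hLlen, hLV, hL⟩ := ih (by omega)
    have hLm : ∀ t ∈ T, ∀ y ∈ t ++ L, y ∈ maximalIdeal R := fun t ht =>
      List.forall_mem_append.2 ⟨mem_maximalIdeal_of_isRegular (hTX t ht).2,
        fun y hy => hV ▸ Ideal.subset_span (hLV y hy)⟩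
    obtain ⟨l, hlV, hl⟩ := exists_mem_forall_notMem_of_span_eq_maximalIdeal hV
      (hT.biUnion fun t _ => associatedPrimes.finite R (R ⧸ Ideal.ofList (t ++ L)))
      (fun P hP => by
        obtain ⟨t, ht, hP⟩ := Set.mem_iUnion₂.1 hP
        refine not_maximalIdeal_le_of_mem_associatedPrimes
          (hX.socle_le_ofList (hL t ht) (hLm t ht) ?_) hP
        rw [List.length_append, (hTX t ht).1, hLlen]
        omega)
    refine ⟨L ++ [l], by simp [hLlen], by simpa [or_imp, forall_and] using ⟨hLV, hlV⟩,
      fun t ht => ?_⟩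
    rw [← List.append_assoc, ← isWeaklyRegular_quotient_bot, isWeaklyRegular_quotient_append,
      isWeaklyRegular_quotient_bot, bot_sup_eq, isWeaklyRegular_singleton_iff]
    exact ⟨hL t ht, isSMulRegular_of_forall_notMem_associatedPrimes fun P hP =>
      hl P (Set.mem_biUnion ht hP)⟩

theorem isWeaklyRegular_quotient_minors2 {Φ : Matrix (Fin 2) (Fin 4) R} {x y z : R}
    (hx : x ∈ minors2 Φ) (hy : y ∈ minors2 Φ) (hz : z ∈ minors2 Φ) {L : List R}
    (hm : ∀ a ∈ [x, y, z] ++ L, a ∈ maximalIdeal R) (h : IsWeaklyRegular R ([x, y, z] ++ L)) :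
    IsWeaklyRegular (R ⧸ minors2 Φ) L := by
  rw [minors2_eq_range_eagonNorthcott₁] at *
  induction L using List.reverseRecOn with
  | nil => exact .nil R _
  | append_singleton L l ih =>
    have hrot := isWeaklyRegular_of_perm_of_subset_maximalIdeal h List.perm_append_comm hm
    rw [← isWeaklyRegular_quotient_bot] at h hrot
    rw [← List.append_assoc, isWeaklyRegular_quotient_append, isWeaklyRegular_quotient_bot] at h
    rw [isWeaklyRegular_quotient_append, isWeaklyRegular_quotient_append, bot_sup_eq, bot_sup_eq,
      isWeaklyRegular_singleton_iff, Ideal.ofList_append, Ideal.ofList_singleton] at hrot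
    rw [isWeaklyRegular_quotient_append, isWeaklyRegular_singleton_iff]
    rw [← List.append_assoc] at hm
    exact ⟨ih (List.forall_mem_append.1 hm).1 h.1, isSMulRegular_quotient_sup_range hrot.1.2
      eagonNorthcott₁_comp_eagonNorthcott₂ (exactModulo_eagonNorthcott₂₁ hx hy hz hrot.2)⟩

end LinearSection

section ReducedMinors

variable {R : Type*} [CommRing R] [IsLocalRing R]

theorem isIrredundant_mk_minorVector {D : Ideal R} [IsLocalRing (R ⧸ D)] {a b : Fin 4 → R}
    (ha : ∀ i, a i ∈ maximalIdeal R) (hb : ∀ i, b i ∈ maximalIdeal R)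
    (h : ExactModulo D (eagonNorthcott₂ a b) (eagonNorthcott₁ a b)) :
    IsIrredundant fun n => Ideal.Quotient.mk D (minorVector a b n) := by
  intro c hc k
  choose u hu using fun i => Ideal.Quotient.mk_surjective (c i)
  obtain ⟨v, hv⟩ := h u (by
    simp only [← hu, ← map_mul, ← map_sum, Ideal.Quotient.eq_zero_iff_mem] at hc
    simpa [eagonNorthcott₁, Fintype.linearCombination_apply] using hc)
  have hD : D ≤ maximalIdeal R := le_maximalIdeal (Ideal.Quotient.nontrivial_iff.1 inferInstance)
  have huk : u k ∈ maximalIdeal R := by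
    have h₁ := hD (mem_smul_top_pi.1 hv k)
    have h₂ := mem_smul_top_pi.1 (range_eagonNorthcott₂_le ha hb ⟨v, rfl⟩) k
    simpa using Ideal.add_mem _ h₁ h₂
  rw [← hu, ← map_maximalIdeal_of_surjective _ Ideal.Quotient.mk_surjective]
  exact Ideal.mem_map_of_mem _ huk

variable {K : Type*} [Field K] [Algebra K R]

theorem IsLechIndependent.linearIndependent {ι : Type*} [Fintype ι] {x : ι → R}
    (hx : IsLechIndependent x) (hm : ∀ k, x k ∈ maximalIdeal R) : LinearIndependent K x :=
  IsIrredundant.linearIndependent K fun c hc k =>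
    Ideal.span_le.2 (Set.range_subset_iff.2 hm) (hx c hc k)

theorem finrank_map_mkₐ_add_length_le {V : Submodule K R} [Module.Finite K V] {L : List R}
    (hLV : ∀ y ∈ L, y ∈ V) (hLm : ∀ y ∈ L, y ∈ maximalIdeal R) (hL : IsWeaklyRegular R L) :
    Module.finrank K (V.map (Ideal.Quotient.mkₐ K (Ideal.ofList L)).toLinearMap) + L.length ≤
      Module.finrank K V := by
  let f := (Ideal.Quotient.mkₐ K (Ideal.ofList L)).toLinearMap.domRestrict V
  have hindep : LinearIndependent K L.get :=
    (isLechIndependent_of_isWeaklyRegular (by rwa [List.ofFn_get])).linearIndependent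
      fun i => hLm _ (L.get_mem i)
  let w (i : Fin L.length) : LinearMap.ker f :=
    ⟨⟨L.get i, hLV _ (L.get_mem i)⟩,
      Ideal.Quotient.eq_zero_iff_mem.2 (Ideal.subset_span (L.get_mem i))⟩
  have hw : LinearIndependent K w :=
    .of_comp (V.subtype ∘ₗ (LinearMap.ker f).subtype) hindep
  have hker : L.length ≤ Module.finrank K (LinearMap.ker f) := by
    simpa using hw.fintype_card_le_finrank
  rw [← LinearMap.range_domRestrict, ← f.finrank_range_add_finrank_ker]
  exact Nat.add_le_add_left hker _

theorem minorVector_mem_mul_self {R : Type*} [CommRing R] [Algebra K R] {V : Submodule K R}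
    {a b : Fin 4 → R} (ha : ∀ i, a i ∈ V) (hb : ∀ i, b i ∈ V) (n : Fin 6) :
    minorVector a b n ∈ V * V := by
  fin_cases n <;> exact sub_mem (Submodule.mul_mem_mul (ha _) (hb _))
    (Submodule.mul_mem_mul (ha _) (hb _))

theorem hasExcess_map_minors2 [IsNoetherianRing R] {V : Submodule K R} [Module.Finite K V]
    (hV : Ideal.span (V : Set R) = maximalIdeal R) {Φ : Matrix (Fin 2) (Fin 4) R}
    (hΦ : ∀ i j, Φ i j ∈ V) {x y z : R} (hx : x ∈ minors2 Φ) (hy : y ∈ minors2 Φ)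
    (hz : z ∈ minors2 Φ) {L : List R} (hLV : ∀ l ∈ L, l ∈ V)
    (hrank : Module.finrank K V ≤ 3 + L.length) (hL : IsWeaklyRegular R (L ++ [x, y, z])) :
    HasExcess 3 ((minors2 Φ).map (Ideal.Quotient.mk (Ideal.ofList L))) := by
  have hVm {v : R} (hv : v ∈ V) : v ∈ maximalIdeal R := hV ▸ Ideal.subset_span hv
  have hLm (l : R) (hl : l ∈ L) : l ∈ maximalIdeal R := hVm (hLV l hl)
  have := isLocalRing_quotient_ofList hLm
  rw [← isWeaklyRegular_quotient_bot, isWeaklyRegular_quotient_append,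
    isWeaklyRegular_quotient_bot, bot_sup_eq] at hL
  rw [minors2_eq_range_eagonNorthcott₁] at *
  have hirr := isIrredundant_mk_minorVector (fun j => hVm (hΦ 0 j)) (fun j => hVm (hΦ 1 j))
    (exactModulo_eagonNorthcott₂₁ hx hy hz hL.2)
  have hspan : Ideal.span (V.map (Ideal.Quotient.mkₐ K (Ideal.ofList L)).toLinearMap : Set _) =
      maximalIdeal (R ⧸ Ideal.ofList L) := by
    rw [← map_maximalIdeal_of_surjective _ Ideal.Quotient.mk_surjective, ← hV, Ideal.map_span]
    rfl
  have hdim := finrank_map_mkₐ_add_length_le hLV hLm hL.1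
  have hsq := hirr.span_range_eq_maximalIdeal_sq hspan (fun n => by
      rw [← Submodule.map_mul]
      exact Submodule.mem_map_of_mem (minorVector_mem_mul_self (hΦ 0) (hΦ 1) n))
    ((Nat.choose_le_choose 2 (by omega : _ ≤ 4)).trans (by rw [Fintype.card_fin]; decide))
  rw [range_eagonNorthcott₁_eq_span, Ideal.map_span, ← Set.range_comp]
  exact hsq ▸ hirr.hasExcess hsq three_pos (by simp)

end ReducedMinors

theorem not_hasExcess_map_span_triple {R S : Type*} [CommRing R] [CommRing S] (f : R →+* S)
    (x y z : R) : ¬ HasExcess 3 ((Ideal.span {x, y, z}).map f) := by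
  have hrange : Set.range ![f x, f y, f z] = f '' {x, y, z} := by
    simp only [Matrix.range_cons, Matrix.range_empty, Set.union_empty, Set.singleton_union,
      Set.image_insert_eq, Set.image_singleton]
  simpa [Ideal.map_span, hrange] using not_hasExcess_span_range ![f x, f y, f z]

theorem IsRegularSystemOfParameters.not_licci_minors2 {R : Type*} [CommRing R] [IsLocalRing R]
    [IsNoetherianRing R] {X : List R} (hX : IsRegularSystemOfParameters X) (hlen : 3 ≤ X.length)
    {K : Type*} [Field K] [Infinite K] [Algebra K R] {V : Submodule K R} [Module.Finite K V]
    (hV : Ideal.span (V : Set R) = maximalIdeal R) (hrank : Module.finrank K V ≤ X.length)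
    {Φ : Matrix (Fin 2) (Fin 4) R} (hΦ : ∀ i j, Φ i j ∈ V) {x y z : R} (hx : x ∈ minors2 Φ)
    (hy : y ∈ minors2 Φ) (hz : z ∈ minors2 Φ) (h : IsRegular R [x, y, z]) :
    ¬ Licci (minors2 Φ) := by
  rintro ⟨_, hlink, p, q, r, -, rfl⟩
  obtain ⟨T, hT, hT3, hexcess⟩ := hX.exists_triples_of_linked hlink
  obtain ⟨L, hLlen, hLV, hL⟩ := hX.exists_list_isWeaklyRegular_append hV (n := 3)
    (hT.insert [x, y, z]) (Set.forall_mem_insert.2 ⟨⟨rfl, h⟩, hT3⟩) (X.length - 3) (by omega)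
  obtain ⟨hxyzL, hTL⟩ := Set.forall_mem_insert.1 hL
  have hLm (l : R) (hl : l ∈ L) : l ∈ maximalIdeal R := hV ▸ Ideal.subset_span (hLV l hl)
  have hm := List.forall_mem_append.2 ⟨mem_maximalIdeal_of_isRegular h, hLm⟩
  have hstart := hasExcess_map_minors2 hV hΦ hx hy hz hLV (by omega)
    (isWeaklyRegular_of_perm_of_subset_maximalIdeal hxyzL List.perm_append_comm hm)
  exact not_hasExcess_map_span_triple _ p q r
    ((hexcess L hLm (by omega) hTL (isWeaklyRegular_quotient_minors2 hx hy hz hm hxyzL)).2 hstart)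

/-! ### Linkage under faithfully flat base change -/

section BaseChange

open TensorProduct

variable {A B : Type*} [CommRing A] [CommRing B]

section Flat

variable [Algebra A B]

theorem tmul_mk_eq_zero_iff {Y : Ideal A} {b : B} {s : A} :
    b ⊗ₜ[A] Ideal.Quotient.mk Y s = 0 ↔ b * algebraMap A B s ∈ Y.map (algebraMap A B) := by
  rw [← (tensorQuotEquivQuotSMul B Y).map_eq_zero_iff, tensorQuotEquivQuotSMul_tmul_mk,
    Submodule.Quotient.mk_eq_zero, Ideal.smul_top_eq_map, Algebra.smul_def, mul_comm]
  rfl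

variable [Module.Flat A B]

theorem mem_map_ker_of_tmul_eq_zero {M : Type*} [AddCommGroup M] [Module A M] {g : A →ₗ[A] M}
    {b : B} (hb : b ⊗ₜ[A] g 1 = 0) :
    b ∈ Ideal.map (algebraMap A B) (LinearMap.ker g) := by
  have hexact := Module.Flat.lTensor_exact B (LinearMap.exact_subtype_ker_map g)
  obtain ⟨t, ht⟩ := (hexact (b ⊗ₜ 1)).1 hb
  suffices TensorProduct.rid A B ((LinearMap.ker g).subtype.lTensor B t) ∈
      Ideal.map (algebraMap A B) (LinearMap.ker g) by
    rwa [ht, TensorProduct.rid_tmul, one_smul] at this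
  clear ht
  induction t with
  | zero => simp
  | tmul b a =>
    rw [LinearMap.lTensor_tmul, TensorProduct.rid_tmul, Algebra.smul_def]
    exact Ideal.mul_mem_right _ _ (Ideal.mem_map_of_mem _ a.2)
  | add t u ht hu => simpa only [map_add] using add_mem ht hu

theorem map_colon_of_flat [IsNoetherianRing A] (Y I : Ideal A) :
    (Submodule.colon Y (I : Set A)).map (algebraMap A B) =
      Submodule.colon (Y.map (algebraMap A B)) (I.map (algebraMap A B) : Set B) := by
  obtain ⟨n, s, rfl⟩ := Submodule.fg_iff_exists_fin_generating_family.1 (IsNoetherian.noetherian I)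
  let g : A →ₗ[A] (Fin n → A ⧸ Y) :=
    LinearMap.toSpanSingleton A _ fun j => Ideal.Quotient.mk Y (s j)
  have hker : LinearMap.ker g = Submodule.colon Y (Set.range s) := by
    ext a
    simp [g, funext_iff, Submodule.mem_colon, Algebra.smul_def, ← map_mul,
      Ideal.Quotient.eq_zero_iff_mem]
  rw [Submodule.colon_span, ← Ideal.span, Ideal.map_span, ← Set.range_comp, Ideal.colon_span,
    ← hker]
  ext b
  refine ⟨fun hb => ?_, fun hb => mem_map_ker_of_tmul_eq_zero ?_⟩
  · refine Ideal.map_le_iff_le_comap.2 (fun a ha => Submodule.mem_colon.2 ?_) hb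
    rw [hker] at ha
    rintro _ ⟨j, rfl⟩
    rw [smul_eq_mul, Function.comp_apply, ← map_mul]
    exact Ideal.mem_map_of_mem _ (Submodule.mem_colon.1 ha _ ⟨j, rfl⟩)
  · refine (TensorProduct.piRight A A B fun _ => A ⧸ Y).injective (funext fun j => ?_)
    simpa [g] using tmul_mk_eq_zero_iff.2 (Submodule.mem_colon.1 hb _ ⟨j, rfl⟩)

end Flat

theorem map_span_triple (f : A →+* B) (x y z : A) :
    (Ideal.span {x, y, z}).map f = Ideal.span {f x, f y, f z} := by
  simp only [Ideal.map_span, Set.image_insert_eq, Set.image_singleton]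

variable {f : A →+* B}

theorem isRegular_map (hf : f.FaithfullyFlat) {l : List A} (h : IsRegular A l) :
    IsRegular B (l.map f) := by
  algebraize [f]
  exact h.of_faithfullyFlat

variable [IsNoetherianRing A]

theorem directlyLinked_map (hf : f.FaithfullyFlat) {I J : Ideal A} (h : DirectlyLinked I J) :
    DirectlyLinked (I.map f) (J.map f) := by
  obtain ⟨x, y, z, hx, hy, hz, hxyz, rfl⟩ := h
  refine ⟨f x, f y, f z, Ideal.mem_map_of_mem _ hx, Ideal.mem_map_of_mem _ hy,
    Ideal.mem_map_of_mem _ hz, isRegular_map hf hxyz, ?_⟩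
  rw [← map_span_triple]
  algebraize [f]
  exact map_colon_of_flat _ I

theorem linked_map (hf : f.FaithfullyFlat) {I J : Ideal A} (h : Linked I J) :
    Linked (I.map f) (J.map f) :=
  h.lift (Ideal.map f) fun _ _ => directlyLinked_map hf

theorem licci_map (hf : f.FaithfullyFlat) {I : Ideal A} (h : Licci I) : Licci (I.map f) := by
  obtain ⟨_, hlinked, x, y, z, hxyz, rfl⟩ := h
  exact ⟨_, linked_map hf hlinked, f x, f y, f z, isRegular_map hf hxyz, map_span_triple f x y z⟩

theorem minors2_le {R : Type*} [CommRing R] {p q : ℕ} {Φ : Matrix (Fin p) (Fin q) R} {P : Ideal R}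
    (h : ∀ i j, Φ i j ∈ P) : minors2 Φ ≤ P := by
  refine Ideal.span_le.2 ?_
  rintro _ ⟨r, c, -, -, rfl⟩
  rw [Matrix.det_fin_two]
  exact sub_mem (P.mul_mem_right _ (h _ _)) (P.mul_mem_right _ (h _ _))

theorem map_minors2 {R S : Type*} [CommRing R] [CommRing S] (f : R →+* S) {p q : ℕ}
    (Φ : Matrix (Fin p) (Fin q) R) : (minors2 Φ).map f = minors2 (Φ.map f) := by
  rw [minors2, minors2, Ideal.map_span]
  congr 1
  ext d
  constructor
  · rintro ⟨_, ⟨r, c, hr, hc, rfl⟩, rfl⟩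
    exact ⟨r, c, hr, hc, f.map_det _⟩
  · rintro ⟨r, c, hr, hc, rfl⟩
    exact ⟨_, ⟨r, c, hr, hc, rfl⟩, f.map_det _⟩

end BaseChange

/-! ### The localized polynomial ring -/

section Polynomial

open MvPolynomial

variable {σ R : Type*} [CommRing R]

variable (σ R) in
theorem idealOfVars_eq_ker_constantCoeff :
    idealOfVars σ R = RingHom.ker constantCoeff := by
  ext p
  rw [← pow_one (idealOfVars σ R), mem_pow_idealOfVars_iff']
  simp [constantCoeff_eq, Finsupp.degree_eq_zero_iff]

instance isPrime_idealOfVars [IsDomain R] : (idealOfVars σ R).IsPrime :=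
  idealOfVars_eq_ker_constantCoeff σ R ▸ RingHom.ker_isPrime _

theorem isSMulRegular_X_quotient_span_X_image {s : Set σ} {i : σ} (hi : i ∉ s) :
    IsSMulRegular (MvPolynomial σ R ⧸ Ideal.span (X '' s : Set (MvPolynomial σ R)))
      (X i : MvPolynomial σ R) := by
  refine (isSMulRegular_quotient_iff_mem_of_smul_mem _ _).2 fun c hc => ?_
  rw [mem_ideal_span_X_image] at hc ⊢
  intro m hm
  obtain ⟨j, hj, hne⟩ := hc (Finsupp.single i 1 + m) (by
    rw [smul_eq_mul, mem_support_iff, coeff_X_mul]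
    exact mem_support_iff.1 hm)
  have hij : i ≠ j := fun h => hi (h ▸ hj)
  exact ⟨j, hj, by simpa [Finsupp.single_apply, hij] using hne⟩

theorem isWeaklyRegular_map_X_quotient {l : List σ} (hl : l.Nodup) {s : Set σ}
    (hs : ∀ i ∈ l, i ∉ s) :
    IsWeaklyRegular (MvPolynomial σ R ⧸ Ideal.span (X '' s : Set (MvPolynomial σ R)))
      (l.map (X : σ → MvPolynomial σ R)) := by
  induction l generalizing s with
  | nil => exact .nil _ _
  | cons i l ih =>
    obtain ⟨hil, hl⟩ := List.nodup_cons.1 hl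
    obtain ⟨his, hs⟩ := List.forall_mem_cons.1 hs
    rw [List.map_cons, isWeaklyRegular_quotient_cons, ← Ideal.span_union, ← Set.image_singleton,
      ← Set.image_union]
    refine ⟨isSMulRegular_X_quotient_span_X_image his, ih hl fun j hj => ?_⟩
    rintro (hjs | rfl)
    exacts [hs j hj hjs, hil hj]

theorem isWeaklyRegular_map_X {l : List σ} (hl : l.Nodup) :
    IsWeaklyRegular (MvPolynomial σ R) (l.map (X : σ → MvPolynomial σ R)) := by
  have h := isWeaklyRegular_map_X_quotient (R := R) hl (s := ∅) (by simp)
  rwa [Set.image_empty, Ideal.span_empty, isWeaklyRegular_quotient_bot] at h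

theorem flat_map_algebraMap (σ k K : Type*) [CommRing k] [CommRing K] [Algebra k K]
    [Module.Flat k K] : (MvPolynomial.map (σ := σ) (algebraMap k K)).Flat := by
  let : Algebra (MvPolynomial σ k) (MvPolynomial σ K) := algebraMvPolynomial
  exact RingHom.flat_algebraMap_iff.2 (Module.Flat.isBaseChange k (MvPolynomial σ k) K _
    (Algebra.IsPushout.out (R' := K)))

theorem comap_map_algebraMap_idealOfVars (σ k K : Type*) [CommRing k] [CommRing K] [Algebra k K]
    [FaithfulSMul k K] :
    (idealOfVars σ K).comap (MvPolynomial.map (algebraMap k K)) = idealOfVars σ k := by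
  ext p
  simp [idealOfVars_eq_ker_constantCoeff, constantCoeff_map]

theorem faithfullyFlat_localRingHom {A B : Type*} [CommRing A] [CommRing B] {f : A →+* B}
    (hf : f.Flat) {P : Ideal A} [P.IsPrime] {Q : Ideal B} [Q.IsPrime] (hPQ : P = Q.comap f) :
    (Localization.localRingHom P Q f hPQ).FaithfullyFlat := by
  have hflat := RingHom.Flat.localRingHom hf Q P hPQ
  have hlocal := Localization.isLocalHom_localRingHom P Q f hPQ
  algebraize [Localization.localRingHom P Q f hPQ]
  exact Module.FaithfullyFlat.of_flat_of_isLocalHom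

/-- The localization of `K[X₁, …, X_e]` at the ideal generated by the variables. -/
abbrev LocalPolynomialRing (K : Type*) [Field K] (e : ℕ) : Type _ :=
  Localization.AtPrime (idealOfVars (Fin e) K)

theorem isRegularSystemOfParameters_ofFn_X (K : Type*) [Field K] (e : ℕ) :
    IsRegularSystemOfParameters (List.ofFn fun i =>
      algebraMap (MvPolynomial (Fin e) K) (LocalPolynomialRing K e) (X i)) where
  isWeaklyRegular := by
    have h := (isWeaklyRegular_map_X (R := K) (List.nodup_finRange e)).of_isLocalization
      (LocalPolynomialRing K e) (idealOfVars (Fin e) K).primeCompl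
    rwa [List.map_map, ← List.ofFn_eq_map] at h
  ofList_eq := by
    rw [ofList_ofFn, ← Localization.AtPrime.map_eq_maximalIdeal, Ideal.map_span, ← Set.range_comp]
    rfl

variable {k : Type*} [Field k] {e : ℕ}

theorem mem_idealOfVars_of_isHomogeneous_one {p : MvPolynomial σ R} (hp : p.IsHomogeneous 1) :
    p ∈ idealOfVars σ R := by
  rw [idealOfVars_eq_ker_constantCoeff, RingHom.mem_ker, constantCoeff_eq]
  exact hp.coeff_eq_zero (by simp)

theorem algebraMap_mem_span_X {p : MvPolynomial (Fin e) k} (hp : p.IsHomogeneous 1) :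
    algebraMap _ (LocalPolynomialRing k e) p ∈ Submodule.span k (Set.range fun i =>
      algebraMap (MvPolynomial (Fin e) k) (LocalPolynomialRing k e) (X i)) := by
  have hspan : p ∈ Submodule.span k (Set.range X) := by
    rwa [← homogeneousSubmodule_one_eq_span_X, mem_homogeneousSubmodule]
  have himage := Submodule.mem_map_of_mem
    (f := (IsScalarTower.toAlgHom k _ (LocalPolynomialRing k e)).toLinearMap) hspan
  rwa [Submodule.map_span, ← Set.range_comp] at himage

variable {Φ : Matrix (Fin 2) (Fin 4) (MvPolynomial (Fin e) k)}

theorem not_licci_map_minors2_of_infinite [Infinite k] (he : 3 ≤ e)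
    (hΦ : ∀ i j, (Φ i j).IsHomogeneous 1) {x y z : LocalPolynomialRing k e}
    (hx : x ∈ (minors2 Φ).map (algebraMap _ _)) (hy : y ∈ (minors2 Φ).map (algebraMap _ _))
    (hz : z ∈ (minors2 Φ).map (algebraMap _ _))
    (h : IsRegular (LocalPolynomialRing k e) [x, y, z]) :
    ¬ Licci ((minors2 Φ).map (algebraMap _ (LocalPolynomialRing k e))) := by
  have hX := isRegularSystemOfParameters_ofFn_X k e
  have := FiniteDimensional.span_of_finite k (Set.finite_range fun i =>
    algebraMap (MvPolynomial (Fin e) k) (LocalPolynomialRing k e) (X i))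
  rw [map_minors2] at *
  refine hX.not_licci_minors2 (by rwa [List.length_ofFn]) ?_ ?_
    (fun i j => algebraMap_mem_span_X (hΦ i j)) hx hy hz h
  · rw [← hX.ofList_eq, ofList_ofFn, Ideal.span, Submodule.span_span_of_tower]
  · rw [List.length_ofFn]
    exact (finrank_range_le_card _).trans_eq (Fintype.card_fin e)

theorem not_licci_map_minors2 (he : 3 ≤ e) (hΦ : ∀ i j, (Φ i j).IsHomogeneous 1)
    {x y z : LocalPolynomialRing k e}
    (hx : x ∈ (minors2 Φ).map (algebraMap _ _)) (hy : y ∈ (minors2 Φ).map (algebraMap _ _))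
    (hz : z ∈ (minors2 Φ).map (algebraMap _ _))
    (h : IsRegular (LocalPolynomialRing k e) [x, y, z]) :
    ¬ Licci ((minors2 Φ).map (algebraMap _ (LocalPolynomialRing k e))) := by
  let K := AlgebraicClosure k
  have hcomap := (comap_map_algebraMap_idealOfVars (Fin e) k K).symm
  let f : LocalPolynomialRing k e →+* LocalPolynomialRing K e :=
    Localization.localRingHom _ _ _ hcomap
  have hf : f.FaithfullyFlat := faithfullyFlat_localRingHom (flat_map_algebraMap (Fin e) k K) _
  have hmap : ((minors2 Φ).map (algebraMap _ _)).map f =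
      (minors2 (Φ.map (MvPolynomial.map (algebraMap k K)))).map
        (algebraMap _ (LocalPolynomialRing K e)) := by
    rw [← map_minors2, Ideal.map_map, Ideal.map_map]
    exact congrArg (Ideal.map · _) (RingHom.ext (Localization.localRingHom_to_map _ _ _ hcomap))
  have hmem {p} (hp : p ∈ (minors2 Φ).map (algebraMap _ _)) := hmap ▸ Ideal.mem_map_of_mem f hp
  intro hlicci
  exact not_licci_map_minors2_of_infinite he (fun i j => (hΦ i j).map _) (hmem hx) (hmem hy)
    (hmem hz) (isRegular_map hf h) (hmap ▸ licci_map hf hlicci)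

end Polynomial

end Linkage

/-- **Proposition 2.4 (first case).** Let `k` be a field, `e ≥ 3`, `𝓠 = k[X₁, …, X_e]`,
and `Q` the localization of `𝓠` at the maximal ideal `𝔪 = (X₁, …, X_e)`.  Let `Φ` be a
`2 × 4` matrix of linear forms in `𝓠` and `𝓘` the ideal of `2 × 2` minors of `Φ`, and
assume `𝓘` contains a `𝓠`-regular sequence of length `3`.  Then the extension `I` of
`𝓘` to `Q` is a grade `3` perfect ideal of resolution format `(1, 6, 8, 3)` and `I` is
not licci.  (The hypothesis `𝔪.IsPrime` is a consequence of `h𝔪`.) -/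
theorem stmt_9 (k : Type*) [Field k] (e : ℕ) (he : 3 ≤ e)
    (𝔪 : Ideal (MvPolynomial (Fin e) k))
    (h𝔪 : 𝔪 = Ideal.span (Set.range MvPolynomial.X)) [𝔪.IsPrime]
    (Φ : Matrix (Fin 2) (Fin 4) (MvPolynomial (Fin e) k))
    (hΦ : ∀ i j, (Φ i j).IsHomogeneous 1)
    (𝓘 : Ideal (MvPolynomial (Fin e) k)) (h𝓘 : 𝓘 = minors2 Φ)
    (hreg : ∃ x y z : MvPolynomial (Fin e) k, x ∈ 𝓘 ∧ y ∈ 𝓘 ∧ z ∈ 𝓘 ∧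
      RingTheory.Sequence.IsRegular (MvPolynomial (Fin e) k) [x, y, z]) :
    IsGrade3PerfectOfFormat
        (𝓘.map (algebraMap (MvPolynomial (Fin e) k) (Localization.AtPrime 𝔪))) 6 3 ∧
      ¬ Licci (𝓘.map (algebraMap (MvPolynomial (Fin e) k) (Localization.AtPrime 𝔪))) := by
  subst h𝔪 h𝓘
  obtain ⟨x, y, z, hx, hy, hz, hxyz⟩ := hreg
  have hΦ𝔪 (i j) : Φ i j ∈ MvPolynomial.idealOfVars (Fin e) k :=
    Linkage.mem_idealOfVars_of_isHomogeneous_one (hΦ i j)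
  have hmem : ∀ a ∈ [x, y, z], a ∈ MvPolynomial.idealOfVars (Fin e) k := by
    simpa using ⟨Linkage.minors2_le hΦ𝔪 hx, Linkage.minors2_le hΦ𝔪 hy, Linkage.minors2_le hΦ𝔪 hz⟩
  have hxyzQ := hxyz.toIsWeaklyRegular.isRegular_of_isLocalization_of_mem
    (Linkage.LocalPolynomialRing k e) _ hmem
  have hxQ := Ideal.mem_map_of_mem (algebraMap _ (Linkage.LocalPolynomialRing k e)) hx
  have hyQ := Ideal.mem_map_of_mem (algebraMap _ (Linkage.LocalPolynomialRing k e)) hy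
  have hzQ := Ideal.mem_map_of_mem (algebraMap _ (Linkage.LocalPolynomialRing k e)) hz
  refine ⟨?_, Linkage.not_licci_map_minors2 he hΦ hxQ hyQ hzQ hxyzQ⟩
  rw [Linkage.map_minors2] at *
  refine Linkage.isGrade3PerfectOfFormat_minors2 (fun i j => ?_) hxQ hyQ hzQ hxyzQ
  rw [← Localization.AtPrime.map_eq_maximalIdeal]
  exact Ideal.mem_map_of_mem _ (hΦ𝔪 i j)
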